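/- arXiv:2404.00259 — 5 statements merged into one kernel-verified Lean document; each statement's English description precedes it below -/
import Mathlib

section
/- Let M be a von Neumann algebra with a faithful normal semifinite trace τ. If f ∈ M is a nonzero finite projection, then there exists a central projection z ∈ M such that zf ≠ 0 and τ(zf) < ∞. -/
open ContinuousLinearMap Filter Topology

noncomputable section

namespace VNA

variable {H : Type*} [NormedAddCommGroup H] [InnerProductSpace ℂ H] [CompleteSpace H]

/-- A projection (orthogonal projection): idempotent and self-adjoint. -/
def IsProjection (p : H →L[ℂ] H) : Prop := p * p = p ∧ star p = p

/-- Murray–von Neumann equivalence of `p` and `q` relative to `M`. -/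
def MvNE (M : VonNeumannAlgebra H) (p q : H →L[ℂ] H) : Prop :=
  ∃ v ∈ M, star v * v = p ∧ v * star v = q

/-- `p` is a finite projection of `M`; for projections, `q ≤ p` is the range
containment `p * q = q`. -/
def IsFiniteProjection (M : VonNeumannAlgebra H) (p : H →L[ℂ] H) : Prop :=
  p ∈ M ∧ IsProjection p ∧
    ∀ q, q ∈ M → IsProjection q → p * q = q → MvNE M q p → q = p

def IsInfiniteProjection (M : VonNeumannAlgebra H) (p : H →L[ℂ] H) : Prop :=
  p ∈ M ∧ IsProjection p ∧ ¬ IsFiniteProjection M p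

/-- The centre `Z(M) = M ∩ M'` as a set. -/
def centerSet (M : VonNeumannAlgebra H) : Set (H →L[ℂ] H) :=
  {z | z ∈ M ∧ ∀ y ∈ M, z * y = y * z}

def IsCentralProjection (M : VonNeumannAlgebra H) (z : H →L[ℂ] H) : Prop :=
  IsProjection z ∧ z ∈ centerSet M

def IsProperlyInfiniteProjection (M : VonNeumannAlgebra H) (p : H →L[ℂ] H) : Prop :=
  p ∈ M ∧ IsProjection p ∧
    ∀ z, IsCentralProjection M z → z * p ≠ 0 → IsInfiniteProjection M (z * p)

def ProperlyInfinite (M : VonNeumannAlgebra H) : Prop :=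
  IsProperlyInfiniteProjection M 1

/-- `M` is σ-finite: every family of pairwise orthogonal nonzero projections in `M`
is countable. -/
def SigmaFinite (M : VonNeumannAlgebra H) : Prop :=
  ∀ S : Set (H →L[ℂ] H), (∀ p ∈ S, p ∈ M ∧ IsProjection p ∧ p ≠ 0) →
    (∀ p ∈ S, ∀ q ∈ S, p ≠ q → p * q = 0) → S.Countable

/-- A faithful normal semifinite trace on `M`. -/
structure IsFNSTrace (M : VonNeumannAlgebra H) (τ : (H →L[ℂ] H) → ENNReal) : Prop where
  map_zero : τ 0 = 0
  additive : ∀ x y : H →L[ℂ] H, x ∈ M → y ∈ M → 0 ≤ x → 0 ≤ y → τ (x + y) = τ x + τ y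
  homogeneous : ∀ (c : ℝ) (x : H →L[ℂ] H), 0 ≤ c → x ∈ M → 0 ≤ x →
    τ (c • x) = ENNReal.ofReal c * τ x
  tracial : ∀ x : H →L[ℂ] H, x ∈ M → τ (star x * x) = τ (x * star x)
  faithful : ∀ x : H →L[ℂ] H, x ∈ M → 0 ≤ x → τ x = 0 → x = 0
  normal : ∀ (ι : Type*) [Preorder ι] [IsDirected ι (· ≤ ·)] [Nonempty ι]
      (f : ι → (H →L[ℂ] H)) (x : H →L[ℂ] H),
      (∀ i, f i ∈ M) → (∀ i, 0 ≤ f i) → Monotone f → (∃ C : ℝ, ∀ i, ‖f i‖ ≤ C) →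
      x ∈ M → IsLUB (Set.range f) x → τ x = ⨆ i, τ (f i)
  semifinite : ∀ x : H →L[ℂ] H, x ∈ M → 0 ≤ x → x ≠ 0 →
      ∃ y, y ∈ M ∧ 0 ≤ y ∧ y ≤ x ∧ y ≠ 0 ∧ τ y < ⊤

/-- `p` is a `τ`-finite projection of `M`. -/
def IsTauFiniteProjection (M : VonNeumannAlgebra H) (τ : (H →L[ℂ] H) → ENNReal)
    (p : H →L[ℂ] H) : Prop :=
  p ∈ M ∧ IsProjection p ∧ τ p < ⊤

/-- `F₁⁺(M) = {x ∈ M : 0 ≤ x ≤ 1, px = x for some τ-finite projection p}`. -/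
def F1plus (M : VonNeumannAlgebra H) (τ : (H →L[ℂ] H) → ENNReal) : Set (H →L[ℂ] H) :=
  {x | x ∈ M ∧ 0 ≤ x ∧ x ≤ 1 ∧ ∃ p, IsTauFiniteProjection M τ p ∧ p * x = x}

/-- `K(M,τ)`: operator-norm closure of the τ-finitely supported elements of `M`. -/
def Kideal (M : VonNeumannAlgebra H) (τ : (H →L[ℂ] H) → ENNReal) : Set (H →L[ℂ] H) :=
  closure {x | x ∈ M ∧ ∃ p, IsTauFiniteProjection M τ p ∧ p * x = x}

/-- A commuting self-adjoint `n`-tuple in `M`. -/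
def IsCommutingSelfAdjointTuple (M : VonNeumannAlgebra H) {n : ℕ}
    (α : Fin n → (H →L[ℂ] H)) : Prop :=
  (∀ j, α j ∈ M) ∧ (∀ j, star (α j) = α j) ∧ ∀ i j, α i * α j = α j * α i

/-- `‖[r,α]‖ = max_{1≤j≤n} ‖[r, α(j)]‖`. -/
def commNorm {n : ℕ} (α : Fin n → (H →L[ℂ] H)) (r : H →L[ℂ] H) : ℝ :=
  ⨆ j, ‖r * α j - α j * r‖

/-- `WZ*(S)`: the double commutant in `B(H)` of `S ∪ Z(M)`. -/
def WZstar (M : VonNeumannAlgebra H) (S : Set (H →L[ℂ] H)) : Set (H →L[ℂ] H) :=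
  Set.centralizer (Set.centralizer (S ∪ centerSet M))

/-- A diagonal operator of `M`: `d = Σ_k λ_k p_k` with pairwise orthogonal
projections `p_k ∈ M`, the series converging in the strong operator topology. -/
def IsDiagonal (M : VonNeumannAlgebra H) (d : H →L[ℂ] H) : Prop :=
  ∃ (p : ℕ → H →L[ℂ] H) (lam : ℕ → ℂ),
    (∀ k, p k ∈ M) ∧ (∀ k, IsProjection (p k)) ∧
    (∀ k l, k ≠ l → p k * p l = 0) ∧
    ∀ ξ : H, HasSum (fun k => lam k • (p k ξ)) (d ξ)

end VNA

namespace VNA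

variable {H : Type*} [NormedAddCommGroup H] [InnerProductSpace ℂ H] [CompleteSpace H]

theorem mem_of_commute (M : VonNeumannAlgebra H) (a : H →L[ℂ] H)
    (h : ∀ y ∈ M.commutant, y * a = a * y) : a ∈ M := by
  rw [← M.commutant_commutant, VonNeumannAlgebra.mem_commutant_iff]
  exact h

theorem commute_of_mem (M : VonNeumannAlgebra H) {a y : H →L[ℂ] H} (ha : a ∈ M)
    (hy : y ∈ M.commutant) : y * a = a * y :=
  (VonNeumannAlgebra.mem_commutant_iff.1 hy a ha).symm

theorem smul_mem' (M : VonNeumannAlgebra H) {a : H →L[ℂ] H} (ha : a ∈ M) (c : ℝ) :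
    c • a ∈ M :=
  mem_of_commute M _ fun y hy => by
    rw [mul_smul_comm, smul_mul_assoc, commute_of_mem M ha hy]

theorem cfc_mem (M : VonNeumannAlgebra H) {a : H →L[ℂ] H} (ha : a ∈ M) (g : ℝ → ℝ) :
    cfc g a ∈ M :=
  mem_of_commute M _ fun y hy =>
    ((show Commute a y from (commute_of_mem M ha hy).symm).cfc_real g).eq.symm

/-- Projection onto the closure of a subspace. -/
def clProj (K : Submodule ℂ H) : H →L[ℂ] H := K.topologicalClosure.starProjection

theorem clProj_isStarProjection (K : Submodule ℂ H) : IsStarProjection (clProj K) :=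
  isStarProjection_starProjection

theorem clProj_proj (K : Submodule ℂ H) : IsProjection (clProj K) :=
  ⟨(clProj_isStarProjection K).1, (clProj_isStarProjection K).2⟩

theorem clProj_mem (M : VonNeumannAlgebra H) (K : Submodule ℂ H)
    (hK : ∀ y ∈ M.commutant, ∀ x ∈ K, y x ∈ K) : clProj K ∈ M := by
  rw [VonNeumannAlgebra.IsStarProjection.mem_iff (clProj_isStarProjection K)]
  intro y hy
  rw [clProj, Submodule.range_starProjection]
  exact Submodule.topologicalClosure_mem_invtSubmodule (fun x hx => hK y hy x hx)

theorem clProj_apply (K : Submodule ℂ H) {x : H} (hx : x ∈ K) : clProj K x = x :=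
  Submodule.starProjection_eq_self_iff.2 (K.le_topologicalClosure hx)

theorem mul_clProj (K : Submodule ℂ H) (a : H →L[ℂ] H) (h : ∀ x ∈ K, a x = 0) :
    a * clProj K = 0 := by
  ext x
  have h1 : clProj K x ∈ K.topologicalClosure := Submodule.starProjection_apply_mem _ _
  have h2 : K.topologicalClosure ≤ a.ker :=
    K.topologicalClosure_minimal (fun x hx => h x hx) a.isClosed_ker
  exact h2 h1

theorem proj_nonneg {p : H →L[ℂ] H} (hp : IsProjection p) : 0 ≤ p := by
  have := star_mul_self_nonneg p
  rwa [hp.2, hp.1] at this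

theorem eq_zero_of_star_mul {a : H →L[ℂ] H} (h : star a * a = 0) : a = 0 :=
  CStarRing.star_mul_self_eq_zero_iff a |>.1 h

/-- If `l e ≤ a` and `a` is supported on `p` then so is `e`. -/
theorem proj_le_of_le {p e a : H →L[ℂ] H} (hp : IsProjection p) (he : IsProjection e) {l : ℝ}
    (hl : 0 < l) (hle : l • e ≤ a) (ha : a * p = a) : e * p = e := by
  have h1 := star_left_conjugate_le_conjugate hle (1 - p)
  have h2 : star (1 - p) * a * (1 - p) = 0 := by
    rw [mul_assoc, mul_sub, ha]; simp
  rw [h2] at h1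
  have h3 : star (1 - p) * (l • e) * (1 - p) = l • (star (e * (1 - p)) * (e * (1 - p))) := by
    rw [star_mul, he.2, mul_smul_comm, smul_mul_assoc]
    congr 1
    rw [mul_assoc (star (1 - p)) e (e * _), ← mul_assoc e e, he.1, mul_assoc]
  rw [h3] at h1
  have h4 : star (e * (1 - p)) * (e * (1 - p)) ≤ 0 := by
    have := smul_le_smul_of_nonneg_left h1 (inv_nonneg.2 hl.le)
    simpa [smul_smul, inv_mul_cancel₀ hl.ne'] using this
  have h5 := eq_zero_of_star_mul (le_antisymm h4 (star_mul_self_nonneg _))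
  rw [mul_sub, mul_one, sub_eq_zero] at h5
  exact h5.symm

/-- spectral projection -/
theorem exists_spectral (M : VonNeumannAlgebra H) {a : H →L[ℂ] H} (haM : a ∈ M) (ha : 0 ≤ a)
    (ha0 : a ≠ 0) : ∃ (e h : H →L[ℂ] H) (l : ℝ), 0 < l ∧ e ∈ M ∧ IsProjection e ∧ e ≠ 0 ∧
      l • e ≤ a ∧ h ∈ M ∧ star h = h ∧ e * (h * a * h) = e := by
  have hsa : IsSelfAdjoint a := IsSelfAdjoint.of_nonneg ha
  set l : ℝ := ‖a‖ / 2 with hl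
  have hn : 0 < ‖a‖ := norm_pos_iff.2 ha0
  have hl0 : 0 < l := by positivity
  have hc1 : Continuous fun t : ℝ => max (t - l) 0 := by fun_prop
  have hc2 : Continuous fun t : ℝ => max (l - t) 0 := by fun_prop
  have hc3 : Continuous fun t : ℝ => (Real.sqrt (max t l))⁻¹ := by
    refine Continuous.inv₀ (by fun_prop) fun t => ?_
    have : 0 < max t l := lt_max_of_lt_right hl0
    positivity
  set g := cfc (fun t : ℝ => max (t - l) 0) a with hg
  set k := cfc (fun t : ℝ => max (l - t) 0) a with hk
  set h := cfc (fun t : ℝ => (Real.sqrt (max t l))⁻¹) a with hh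
  have hid : cfc (fun t : ℝ => t) a = a := cfc_id' ℝ a
  have hgk : g - k = a - l • 1 := by
    rw [hg, hk, ← cfc_sub _ _ a hc1.continuousOn hc2.continuousOn]
    have : (fun t : ℝ => max (t - l) 0 - max (l - t) 0) = fun t => t - l := by
      ext t
      rcases le_total t l with h | h
      · rw [max_eq_right (by linarith), max_eq_left (by linarith)]; ring
      · rw [max_eq_left (by linarith), max_eq_right (by linarith)]; ring
    rw [this, cfc_sub (fun t : ℝ => t) (fun _ => l) a, hid, cfc_const l a, Algebra.algebraMap_eq_smul_one]
  have hkg0 : k * g = 0 := by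
    rw [hg, hk, ← cfc_mul _ _ a hc2.continuousOn hc1.continuousOn]
    have : (fun t : ℝ => max (l - t) 0 * max (t - l) 0) = fun t => 0 := by
      ext t
      rcases le_total t l with h | h
      · rw [max_eq_right (b := 0) (a := t - l) (by linarith)]; ring
      · rw [max_eq_right (b := 0) (a := l - t) (by linarith)]; ring
    rw [this]; simp
  have hhah : h * a * h = 1 - l⁻¹ • k := by
    conv_lhs => rw [← hid]
    rw [hh, hk, ← cfc_mul _ _ a hc3.continuousOn (by fun_prop),
      ← cfc_mul _ _ a (by fun_prop) hc3.continuousOn, ← cfc_smul _ _ a hc2.continuousOn,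
      ← cfc_one ℝ a, ← cfc_sub _ _ a (by fun_prop) (by fun_prop)]
    congr 1
    ext t
    have h0 : 0 < max t l := lt_max_of_lt_right hl0
    have h1 : (Real.sqrt (max t l))⁻¹ * t * (Real.sqrt (max t l))⁻¹ = t / max t l := by
      have := Real.mul_self_sqrt h0.le
      have h2 : (Real.sqrt (max t l))⁻¹ * (Real.sqrt (max t l))⁻¹ = (max t l)⁻¹ := by
        rw [← mul_inv, this]
      rw [mul_right_comm, h2]; ring
    simp only [h1, Pi.one_apply, smul_eq_mul]
    rcases le_total t l with h | h
    · rw [max_eq_right h, max_eq_left (by linarith)]; field_simp; ring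
    · have : t ≠ 0 := by linarith
      rw [max_eq_left h, max_eq_right (by linarith)]; field_simp; ring
  have hgsa : star g = g := (cfc_predicate (R := ℝ) _ a : IsSelfAdjoint _)
  have hksa : star k = k := (cfc_predicate (R := ℝ) _ a : IsSelfAdjoint _)
  have hhsa : star h = h := (cfc_predicate (R := ℝ) _ a : IsSelfAdjoint _)
  have hgM : g ∈ M := cfc_mem M haM _
  have hg0 : 0 ≤ g := cfc_nonneg fun t _ => le_max_right _ _
  set e := clProj g.range with he
  have hep := clProj_proj g.range
  rw [← he] at hep
  have heg : e * g = g := by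
    ext x; exact clProj_apply _ ⟨x, rfl⟩
  have hge : g * e = g := by
    have := congrArg star heg
    rwa [star_mul, hep.2, hgsa] at this
  have hke : k * e = 0 := mul_clProj _ _ (by
    rintro _ ⟨x, rfl⟩
    exact congrArg (fun T : H →L[ℂ] H => T x) hkg0)
  have hek : e * k = 0 := by
    have := congrArg star hke
    rwa [star_mul, hep.2, hksa, star_zero] at this
  have haeq : a = g - k + l • 1 := by rw [hgk]; abel
  refine ⟨e, h, l, hl0, ?_, hep, ?_, ?_, cfc_mem M haM _, hhsa, ?_⟩
  · refine clProj_mem M _ ?_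
    rintro y hy _ ⟨x, rfl⟩
    exact ⟨y x, (congrArg (fun T : H →L[ℂ] H => T x) (commute_of_mem M hgM hy)).symm⟩
  · intro h0
    rw [h0, zero_mul] at heg
    -- then a ≤ l
    have h1 : a ≤ algebraMap ℝ _ l := by
      have hk0 : 0 ≤ k := cfc_nonneg fun t _ => le_max_right _ _
      rw [Algebra.algebraMap_eq_smul_one, haeq, ← heg]
      simpa using hk0
    have h2 : ‖a‖ ≤ l := (CStarAlgebra.norm_le_iff_le_algebraMap a hl0.le ha).2 h1
    linarith
  · have hae : a * e = g + l • e := by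
      rw [haeq, add_mul, sub_mul, hge, hke, smul_mul_assoc, one_mul, sub_zero]
    have hea : e * a = g + l • e := by
      rw [haeq, mul_add, mul_sub, heg, hek, mul_smul_comm, mul_one, sub_zero]
    have h1 : 0 ≤ star (1 - e) * a * (1 - e) := star_left_conjugate_nonneg ha _
    have h2 : star (1 - e) * a * (1 - e) = a - (g + l • e) := by
      rw [star_sub, star_one, hep.2, sub_mul, one_mul, mul_sub, mul_one, sub_mul, hae, hea, add_mul,
        hge, smul_mul_assoc, hep.1]
      abel
    rw [h2] at h1
    have := add_le_add h1 hg0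
    rw [← sub_nonneg]
    convert this using 1 <;> abel
  · rw [hhah, mul_sub, mul_smul_comm, hek]; simp

/-- nonzero partial isometry under a nonzero operator -/
theorem exists_pisom (M : VonNeumannAlgebra H) {x p q : H →L[ℂ] H} (hx : x ∈ M) (hx0 : x ≠ 0)
    (hp : IsProjection p) (hxp : x * p = x) (hqx : q * x = x) :
    ∃ w ∈ M, w ≠ 0 ∧ w * star w * w = w ∧ w * p = w ∧ q * w = w := by
  obtain ⟨e, h, l, hl, heM, hep, he0, hle, hhM, hhs, hhe⟩ := exists_spectral M
    (mul_mem (star_mem hx) hx) (star_mul_self_nonneg x)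
    (fun h => hx0 (eq_zero_of_star_mul h))
  have hw : star (x * h * e) * (x * h * e) = e := by
    rw [star_mul, star_mul, hep.2, hhs]
    calc e * (h * star x) * (x * h * e) = e * (h * (star x * x) * h) * e := by
          simp only [mul_assoc]
      _ = e := by rw [hhe, hep.1]
  refine ⟨x * h * e, mul_mem (mul_mem hx hhM) heM, ?_, ?_, ?_, ?_⟩
  · intro h0
    rw [h0, mul_zero] at hw
    exact he0 hw.symm
  · rw [mul_assoc, hw, mul_assoc, hep.1]
  · rw [mul_assoc, proj_le_of_le hp hep hl hle (by rw [mul_assoc, hxp])]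
  · rw [← mul_assoc, ← mul_assoc, hqx]

/-- strong sums of orthogonal partial isometries -/
theorem exists_sum_aux {ι : Type*} (v : ι → H →L[ℂ] H)
    (h1 : ∀ i, v i * star (v i) * v i = v i)
    (h2 : ∀ i j, i ≠ j → star (v i) * v j = 0) (h3 : ∀ i j, i ≠ j → v i * star (v j) = 0) :
    ∃ T : H →L[ℂ] H, ∀ x, HasSum (fun i => v i x) (T x) := by
  classical
  have hS : ∀ s : Finset ι, ‖∑ i ∈ s, v i‖ ≤ 1 := by
    intro s
    set S := ∑ i ∈ s, v i with hSdef
    have hP : ∀ i ∈ s, v i * star S = v i * star (v i) := by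
      intro i hi
      rw [hSdef, star_sum, Finset.mul_sum]
      exact Finset.sum_eq_single i (fun j _ hj => h3 i j hj.symm) (fun h => (h hi).elim)
    have hP2 : ∀ i ∈ s, v i * star (v i) * S = v i := by
      intro i hi
      rw [hSdef, Finset.mul_sum]
      refine (Finset.sum_eq_single i (fun j _ hj => ?_) (fun h => (h hi).elim)).trans (h1 i)
      rw [mul_assoc, h2 i j hj.symm, mul_zero]
    have hSS : S * star S * S = S := by
      conv_lhs => rw [hSdef]
      rw [← hSdef, Finset.sum_mul, Finset.sum_mul]
      refine Finset.sum_congr rfl fun i hi => ?_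
      rw [hP i hi, hP2 i hi]
    have hn : ‖star S * S‖ * ‖star S * S‖ = ‖star S * S‖ := by
      rw [← CStarRing.norm_star_mul_self]
      congr 1
      rw [star_mul, star_star]
      calc star S * S * (star S * S) = star S * (S * star S * S) := by simp only [mul_assoc]
        _ = _ := by rw [hSS]
    rw [CStarRing.norm_star_mul_self] at hn
    by_contra hlt
    push Not at hlt
    have hlt2 : 1 < ‖S‖ * ‖S‖ := by nlinarith
    nlinarith
  have hSx : ∀ (s : Finset ι) x, ‖∑ i ∈ s, v i x‖ ≤ ‖x‖ := by
    intro s x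
    have := (∑ i ∈ s, v i).le_of_opNorm_le (hS s) x
    simpa using this
  have hO : OrthogonalFamily ℂ (fun i => (v i).range) fun i => (v i).range.subtypeₗᵢ := by
    intro i j hij
    rintro ⟨_, x, rfl⟩ ⟨_, y, rfl⟩
    have := congrArg (fun T : H →L[ℂ] H => inner ℂ x (T y)) (h2 i j hij)
    simpa [ContinuousLinearMap.star_eq_adjoint, ContinuousLinearMap.adjoint_inner_right] using this
  have hsum : ∀ x, Summable fun i => v i x := by
    intro x
    have := (hO.summable_iff_norm_sq_summable (fun i => ⟨v i x, x, rfl⟩)).2 (by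
      refine summable_of_sum_le (c := ‖x‖ ^ 2) (fun i => by positivity) fun s => ?_
      rw [← hO.norm_sum]
      exact pow_le_pow_left₀ (norm_nonneg _) (hSx s x) 2)
    exact this
  refine ⟨LinearMap.mkContinuous
    { toFun := fun x => ∑' i, v i x
      map_add' := fun x y => by
        rw [← (hsum x).tsum_add (hsum y)]; simp
      map_smul' := fun c x => by
        simp only [map_smul, RingHom.id_apply]
        exact (hsum x).tsum_const_smul c } 1 ?_, fun x => (hsum x).hasSum⟩
  intro x
  rw [one_mul]
  exact le_of_tendsto (hsum x).hasSum.norm (Filter.Eventually.of_forall fun s => hSx s x)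

theorem exists_sum (M : VonNeumannAlgebra H) {ι : Type*} (v : ι → H →L[ℂ] H) (hM : ∀ i, v i ∈ M)
    (h1 : ∀ i, v i * star (v i) * v i = v i)
    (h2 : ∀ i j, i ≠ j → star (v i) * v j = 0) (h3 : ∀ i j, i ≠ j → v i * star (v j) = 0) :
    ∃ T ∈ M, (∀ a b, (∀ i, a * v i = b * v i) → a * T = b * T) ∧
      (∀ a b, (∀ i, v i * a = v i * b) → T * a = T * b) ∧
      (∀ i, T * star (v i) = v i * star (v i)) ∧ (∀ i, star T * v i = star (v i) * v i) ∧
      T * star T * T = T := by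
  classical
  obtain ⟨T, hT⟩ := exists_sum_aux v h1 h2 h3
  have hL : ∀ a b, (∀ i, a * v i = b * v i) → a * T = b * T := by
    intro a b hab
    ext x
    have ha := (hT x).mapL a
    have hb := (hT x).mapL b
    refine ha.unique ?_
    exact (funext fun i => congrArg (fun T : H →L[ℂ] H => T x) (hab i) :
      (fun i => a (v i x)) = fun i => b (v i x)) ▸ hb
  have hR : ∀ a b, (∀ i, v i * a = v i * b) → T * a = T * b := by
    intro a b hab
    ext x
    have ha := hT (a x)
    have hb := hT (b x)
    refine ha.unique ?_
    exact (funext fun i => congrArg (fun T : H →L[ℂ] H => T x) (hab i) :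
      (fun i => v i (a x)) = fun i => v i (b x)) ▸ hb
  have hTv : ∀ i, T * star (v i) = v i * star (v i) := by
    intro i
    ext x
    refine (hT (star (v i) x)).unique ?_
    refine hasSum_single i fun j hj => ?_
    exact congrArg (fun T : H →L[ℂ] H => T x) (h3 j i hj)
  have hvT : ∀ i, star (v i) * T = star (v i) * v i := by
    intro i
    ext x
    refine ((hT x).mapL (star (v i))).unique ?_
    refine hasSum_single i fun j hj => ?_
    exact congrArg (fun T : H →L[ℂ] H => T x) (h2 i j hj.symm)
  have hTv' : ∀ i, star T * v i = star (v i) * v i := by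
    intro i
    have := congrArg star (hvT i)
    simpa using this
  refine ⟨T, ?_, hL, hR, hTv, hTv', ?_⟩
  · refine mem_of_commute M T fun y hy => ?_
    ext x
    refine ((hT x).mapL y).unique ?_
    exact (funext fun i => congrArg (fun T : H →L[ℂ] H => T x) (commute_of_mem M (hM i) hy) :
      (fun i => y (v i x)) = fun i => v i (y x)) ▸ hT (y x)
  · have := hL (T * star T) 1 fun i => by
      rw [mul_assoc, hTv' i, ← mul_assoc, hTv i, h1, one_mul]
    rwa [one_mul] at this

theorem exists_maximal_family {α : Type*} (P : α → Prop) (R : α → α → Prop)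
    (hsymm : ∀ a b, R a b → R b a) :
    ∃ S : Set α, (∀ v ∈ S, P v) ∧ (∀ v ∈ S, ∀ w ∈ S, v ≠ w → R v w) ∧
      ∀ w, P w → (∀ v ∈ S, R w v) → w ∈ S := by
  obtain ⟨S, hS, hmax⟩ := zorn_subset
    {S : Set α | (∀ v ∈ S, P v) ∧ (∀ v ∈ S, ∀ w ∈ S, v ≠ w → R v w)} (by
      intro c hc hchain
      refine ⟨⋃₀ c, ⟨?_, ?_⟩, fun s hs => Set.subset_sUnion_of_mem hs⟩
      · rintro v ⟨s, hs, hv⟩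
        exact (hc hs).1 v hv
      · rintro v ⟨s, hs, hv⟩ w ⟨t, ht, hw⟩ hne
        rcases hchain.total hs ht with h | h
        · exact (hc ht).2 v (h hv) w hw hne
        · exact (hc hs).2 v hv w (h hw) hne)
  refine ⟨S, hS.1, hS.2, fun w hw hR => ?_⟩
  refine hmax (y := insert w S) ⟨?_, ?_⟩ (Set.subset_insert w S) (Set.mem_insert w S)
  · rintro v (rfl | hv)
    · exact hw
    · exact hS.1 v hv
  · rintro v (rfl | hv) u (rfl | hu) hne
    · exact (hne rfl).elim
    · exact hR u hu
    · exact hsymm _ _ (hR v hv)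
    · exact hS.2 v hv u hu hne

theorem star_mul_zero {a b : H →L[ℂ] H} (h : star a * b = 0) : star b * a = 0 := by
  have := congrArg star h
  simpa using this

theorem mul_star_zero {a b : H →L[ℂ] H} (h : a * star b = 0) : b * star a = 0 := by
  have := congrArg star h
  simpa using this

theorem comparison (M : VonNeumannAlgebra H) {e p : H →L[ℂ] H} (heM : e ∈ M) (hpM : p ∈ M)
    (he : IsProjection e) (hp : IsProjection p) :
    ∃ T ∈ M, T * star T * T = T ∧ T * p = T ∧ e * T = T ∧
      ∀ x ∈ M, (e - T * star T) * x * (p - star T * T) = 0 := by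
  obtain ⟨S, hS, hR, hmax⟩ := exists_maximal_family
    (fun v : H →L[ℂ] H => v ∈ M ∧ v * star v * v = v ∧ v * p = v ∧ e * v = v)
    (fun v w => star v * w = 0 ∧ v * star w = 0)
    (fun a b h => ⟨star_mul_zero h.1, mul_star_zero h.2⟩)
  obtain ⟨T, hTM, hL, hRt, hT1, hT2, hT3⟩ := exists_sum M (fun v : S => (v : H →L[ℂ] H))
    (fun v => (hS v v.2).1) (fun v => (hS v v.2).2.1)
    (fun v w h => (hR v v.2 w w.2 (fun h' => h (Subtype.ext h'))).1)
    (fun v w h => (hR v v.2 w w.2 (fun h' => h (Subtype.ext h'))).2)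
  have hTp : T * p = T := by
    simpa using hRt p 1 fun v => by rw [(hS v v.2).2.2.1, mul_one]
  have heT : e * T = T := by
    simpa using hL e 1 fun v => by rw [(hS v v.2).2.2.2, one_mul]
  have hpT : p * star T = star T := by
    have := congrArg star hTp
    rwa [star_mul, hp.2] at this
  have hTe : star T * e = star T := by
    have := congrArg star heT
    rwa [star_mul, he.2] at this
  have hT3' : star T * T * star T = star T := by
    have := congrArg star hT3
    simpa [mul_assoc] using this
  refine ⟨T, hTM, hT3, hTp, heT, fun x hx => ?_⟩
  by_contra hne
  have hE1 : (e - T * star T) * (e - T * star T) = e - T * star T := by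
    rw [sub_mul, mul_sub, mul_sub, he.1, ← mul_assoc e, heT, mul_assoc T (star T) e, hTe,
      ← mul_assoc (T * star T), hT3]
    abel
  have hP1 : (p - star T * T) * (p - star T * T) = p - star T * T := by
    rw [sub_mul, mul_sub, mul_sub, hp.1, ← mul_assoc p, hpT, mul_assoc (star T) T p, hTp,
      ← mul_assoc (star T * T), hT3']
    abel
  have hP2 : star (p - star T * T) = p - star T * T := by simp [hp.2]
  have hE2 : star (e - T * star T) = e - T * star T := by simp [he.2]
  have heE : e * (e - T * star T) = e - T * star T := by
    rw [mul_sub, he.1, ← mul_assoc, heT]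
  have hPp : (p - star T * T) * p = p - star T * T := by
    rw [sub_mul, hp.1, mul_assoc, hTp]
  obtain ⟨w, hwM, hw0, hw1, hwp, hew⟩ := exists_pisom M
    (x := (e - T * star T) * x * (p - star T * T)) (p := p - star T * T) (q := e - T * star T)
    (mul_mem (mul_mem (sub_mem heM (mul_mem hTM (star_mem hTM))) hx)
      (sub_mem hpM (mul_mem (star_mem hTM) hTM))) hne ⟨hP1, hP2⟩
    (by rw [mul_assoc, hP1]) (by rw [← mul_assoc, ← mul_assoc, hE1])
  have hwS : w ∈ S := by
    refine hmax w ⟨hwM, hw1, ?_, ?_⟩ fun v hv => ⟨?_, ?_⟩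
    · rw [← hwp, mul_assoc, hPp]
    · rw [← hew, ← mul_assoc, heE]
    · have h1 : (e - T * star T) * v = 0 := by
        have a1 := hT2 ⟨v, hv⟩
        have a2 := hT1 ⟨v, hv⟩
        simp only at a1 a2
        rw [sub_mul, (hS v hv).2.2.2, mul_assoc, a1, ← mul_assoc, a2, (hS v hv).2.1, sub_self]
      rw [← hew, star_mul, hE2, mul_assoc, h1, mul_zero]
    · have h1 : (p - star T * T) * star v = 0 := by
        have a1 := hT2 ⟨v, hv⟩
        have a2 := hT1 ⟨v, hv⟩
        simp only at a1 a2
        have a3 : p * star v = star v := by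
          have := congrArg star (hS v hv).2.2.1
          rwa [star_mul, hp.2] at this
        have a4 : star v * v * star v = star v := by
          have := congrArg star (hS v hv).2.1
          simpa [mul_assoc] using this
        rw [sub_mul, a3, mul_assoc, a2, ← mul_assoc, a1, a4, sub_self]
      rw [← hwp, mul_assoc, h1, mul_zero]
  -- now `T* w = w* w` but also `(e - TT*) w = w` gives `w = 0`
  have a1 := hT2 ⟨w, hwS⟩
  have a2 := hT1 ⟨w, hwS⟩
  simp only at a1 a2
  rw [sub_mul, (hS w hwS).2.2.2, mul_assoc, a1, ← mul_assoc, a2, hw1, sub_self] at hew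
  exact hw0 hew.symm

theorem mul_eq_of_star_mul {v e : H →L[ℂ] H} (he : IsProjection e) (h : star v * v = e) :
    v * e = v := by
  have h1 : star (v * e - v) * (v * e - v) = 0 := by
    rw [star_sub, star_mul, he.2]
    have : (e * star v - star v) * (v * e - v) =
      e * (star v * v) * e - e * (star v * v) - (star v * v) * e + star v * v := by
      noncomm_ring
    rw [this, h, he.1, he.1]
    abel
  exact sub_eq_zero.1 (eq_zero_of_star_mul h1)

theorem no_infinite (M : VonNeumannAlgebra H) {e f : H →L[ℂ] H} (he : IsProjection e)
    (hf : IsFiniteProjection M f) (v : ℕ → H →L[ℂ] H) (hM : ∀ n, v n ∈ M)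
    (h1 : ∀ n, star (v n) * v n = e) (h2 : ∀ n, f * v n = v n)
    (h3 : ∀ n m, n ≠ m → star (v n) * v m = 0) : e = 0 := by
  obtain ⟨hfM, hfp, hfin⟩ := hf
  have hve : ∀ n, v n * e = v n := fun n => mul_eq_of_star_mul he (h1 n)
  have hev : ∀ n, e * star (v n) = star (v n) := fun n => by
    have := congrArg star (hve n)
    rwa [star_mul, he.2] at this
  have hvf : ∀ n, star (v n) * f = star (v n) := fun n => by
    have := congrArg star (h2 n)
    rwa [star_mul, hfp.2] at this
  have huu : ∀ n, v (n + 1) * star (v n) * star (v (n + 1) * star (v n)) =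
      v (n + 1) * star (v (n + 1)) := fun n => by
    rw [star_mul, star_star, mul_assoc, ← mul_assoc (star (v n)), h1, hev]
  have huu' : ∀ n, star (v (n + 1) * star (v n)) * (v (n + 1) * star (v n)) =
      v n * star (v n) := fun n => by
    rw [star_mul, star_star, mul_assoc, ← mul_assoc (star (v (n + 1))), h1, hev]
  obtain ⟨T, hTM, hL, hRt, hT1, hT2, hT3⟩ := exists_sum M (fun n => v (n + 1) * star (v n))
    (fun n => mul_mem (hM _) (star_mem (hM _)))
    (fun n => by rw [huu, mul_assoc, ← mul_assoc (star (v (n + 1))), h1, hev])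
    (fun n m h => by
      rw [star_mul, star_star, mul_assoc, ← mul_assoc (star (v (n + 1))), h3 _ _ (by omega),
        zero_mul, mul_zero])
    (fun n m h => by
      rw [star_mul, star_star, mul_assoc, ← mul_assoc (star (v n)), h3 _ _ h,
        zero_mul, mul_zero])
  have hTv : ∀ n, T * v n = v (n + 1) := fun n => by
    have h := hT1 n
    rw [huu, star_mul, star_star] at h
    have h' := congrArg (· * v (n + 1)) h
    simp only [mul_assoc, h1, hve] at h'
    exact h'
  have hTv' : ∀ n, star T * v (n + 1) = v n := fun n => by
    have h := hT2 n
    rw [huu'] at h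
    have h' := congrArg (· * v n) h
    simp only [mul_assoc, h1, hve] at h'
    exact h'
  have hEv : ∀ n, star T * T * v n = v n := fun n => by rw [mul_assoc, hTv, hTv']
  have hET : star T * T * T = T := by
    simpa using hL (star T * T) 1 fun n => by rw [← mul_assoc, hEv, one_mul]
  have hfT : f * T = T := by
    simpa using hL f 1 fun n => by rw [← mul_assoc, h2, one_mul]
  have hTf : T * f = T := by
    simpa using hRt f 1 fun n => by rw [mul_assoc, hvf, mul_one]
  have hv0T : star (v 0) * T = 0 := by
    simpa using hL (star (v 0)) 0 fun n => by
      rw [← mul_assoc, h3 _ _ (by omega), zero_mul, zero_mul]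
  have hTv0 : star T * v 0 = 0 := star_mul_zero hv0T
  have hfT' : f * star T = star T := by
    have := congrArg star hTf
    rwa [star_mul, hfp.2] at this
  have hTE : star T * (star T * T) = star T := by
    have := congrArg star hET
    simpa [mul_assoc] using this
  have hTf' : star T * f = star T := by
    have := congrArg star hfT
    rwa [star_mul, hfp.2] at this
  have hEE : star T * T * (star T * T) = star T * T := by
    rw [mul_assoc, ← mul_assoc T, hT3]
  set W := T + (f - star T * T) with hW
  have hWs : star W = star T + (f - star T * T) := by
    rw [hW]; simp [hfp.2]
  have hWW : star W * W = f := by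
    rw [hWs, hW]
    have : (star T + (f - star T * T)) * (T + (f - star T * T)) =
      star T * T + (star T * f - star T * (star T * T)) + (f * T - star T * T * T)
        + (f * f - (f * star T) * T - star T * (T * f) + star T * T * (star T * T)) := by
      noncomm_ring
    rw [this, hTf', hTE, hfT, hET, hfp.1, hfT', hTf, hEE]
    abel
  have hfW : f * W = W := by
    rw [hW, mul_add, mul_sub, hfT, hfp.1, ← mul_assoc, hfT']
  have hWf : W * f = W := by
    rw [hW, add_mul, sub_mul, hTf, hfp.1, mul_assoc, hTf]
  have hWM : W ∈ M := add_mem hTM (sub_mem hfM (mul_mem (star_mem hTM) hTM))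
  have hq := hfin (W * star W) (mul_mem hWM (star_mem hWM))
    ⟨by rw [mul_assoc, ← mul_assoc (star W), hWW, ← mul_assoc, hWf], by simp⟩
    (by rw [← mul_assoc, hfW]) ⟨star W, star_mem hWM, by rw [star_star], by rw [star_star, hWW]⟩
  have hv0 : v 0 = 0 := by
    have hWv : star W * v 0 = 0 := by
      rw [hWs, add_mul, sub_mul, hTv0, h2, hEv, sub_self, add_zero]
    rw [← h2 0, ← hq, mul_assoc, hWv, mul_zero]
  rw [← h1 0, hv0, mul_zero]

theorem trace_mono {M : VonNeumannAlgebra H} {τ : (H →L[ℂ] H) → ENNReal} (hτ : IsFNSTrace M τ)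
    {x y : H →L[ℂ] H} (hx : x ∈ M) (hy : y ∈ M) (hx0 : 0 ≤ x) (hxy : x ≤ y) : τ x ≤ τ y := by
  have := hτ.additive x (y - x) hx (sub_mem hy hx) hx0 (sub_nonneg.2 hxy)
  rw [add_sub_cancel] at this
  rw [this]
  exact le_self_add

theorem trace_central_le {M : VonNeumannAlgebra H} {τ : (H →L[ℂ] H) → ENNReal}
    (hτ : IsFNSTrace M τ) {z v e : H →L[ℂ] H} (hz : IsCentralProjection M z) (hv : v ∈ M)
    (he : e ∈ M) (hle : v * star v ≤ e) :
    z * (star v * v) ∈ M ∧ 0 ≤ z * (star v * v) ∧ τ (z * (star v * v)) ≤ τ e := by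
  have h1 : z * (star v * v) = star (v * z) * (v * z) := by
    rw [star_mul, hz.1.2]
    calc z * (star v * v) = z * z * (star v * v) := by rw [hz.1.1]
      _ = z * (z * (star v * v)) := mul_assoc _ _ _
      _ = z * (star v * v * z) := by rw [hz.2.2 _ (mul_mem (star_mem hv) hv)]
      _ = _ := by simp only [mul_assoc]
  have h2 : v * z * star (v * z) ≤ e := by
    refine le_trans ?_ hle
    have h3 : v * star v - v * z * star (v * z) = v * (1 - z) * star v := by
      rw [star_mul, hz.1.2, mul_assoc v z, ← mul_assoc z z, hz.1.1]
      noncomm_ring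
    have h4 : IsProjection (1 - z) := by
      refine ⟨?_, by simp [hz.1.2]⟩
      rw [sub_mul, mul_sub, mul_sub, hz.1.1]; simp
    rw [← sub_nonneg, h3]
    exact star_right_conjugate_nonneg (proj_nonneg h4) v
  have hvz : v * z ∈ M := mul_mem hv hz.2.1
  refine ⟨mul_mem hz.2.1 (mul_mem (star_mem hv) hv), ?_, ?_⟩
  · rw [h1]; exact star_mul_self_nonneg _
  · rw [h1, hτ.tracial _ hvz]
    exact trace_mono hτ (mul_mem hvz (star_mem hvz)) he (mul_star_self_nonneg _) h2

theorem trace_sum_lt {M : VonNeumannAlgebra H} {τ : (H →L[ℂ] H) → ENNReal}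
    (hτ : IsFNSTrace M τ) {ι : Type*} (s : Finset ι) (g : ι → H →L[ℂ] H)
    (h : ∀ i ∈ s, g i ∈ M ∧ 0 ≤ g i ∧ τ (g i) < ⊤) :
    (∑ i ∈ s, g i) ∈ M ∧ 0 ≤ (∑ i ∈ s, g i) ∧ τ (∑ i ∈ s, g i) < ⊤ := by
  classical
  induction s using Finset.induction_on with
  | empty => simp [hτ.map_zero, zero_mem]
  | insert a s ha ih =>
    obtain ⟨i1, i2, i3⟩ := ih fun i hi => h i (Finset.mem_insert_of_mem hi)
    obtain ⟨j1, j2, j3⟩ := h a (Finset.mem_insert_self a s)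
    rw [Finset.sum_insert ha]
    refine ⟨add_mem j1 i1, add_nonneg j2 i2, ?_⟩
    rw [hτ.additive _ _ j1 i1 j2 i2]
    exact ENNReal.add_lt_top.2 ⟨j3, i3⟩

/-- central support: separates `e` and `p` if `e M p = 0`. -/
theorem exists_central (M : VonNeumannAlgebra H) {e p : H →L[ℂ] H} (heM : e ∈ M)
    (hes : star e = e) (hps : star p = p)
    (h : ∀ x ∈ M, e * x * p = 0) : ∃ z, IsCentralProjection M z ∧ z * e = e ∧ z * p = 0 := by
  set K : Submodule ℂ H := Submodule.span ℂ {x | ∃ a ∈ M, ∃ y, x = a (e y)} with hK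
  have hinv : ∀ b : H →L[ℂ] H, (∀ a ∈ M, ∀ y, b (a (e y)) ∈ K) → ∀ x ∈ K, b x ∈ K := by
    intro b hb x hx
    have : K ≤ K.comap (b : H →ₗ[ℂ] H) := by
      rw [hK, Submodule.span_le]
      rintro _ ⟨a, ha, y, rfl⟩
      exact hb a ha y
    exact this hx
  have hz1 : clProj K ∈ M := clProj_mem M K fun b hb => hinv b fun a ha y => by
    refine Submodule.subset_span ⟨a, ha, b y, ?_⟩
    have := commute_of_mem M (mul_mem ha heM) hb
    exact congrArg (fun T : H →L[ℂ] H => T y) this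
  have hz2 : clProj K ∈ M.commutant := clProj_mem _ K fun b hb => hinv b fun a ha y => by
    rw [M.commutant_commutant] at hb
    exact Submodule.subset_span ⟨b * a, mul_mem hb ha, y, rfl⟩
  have hpz : p * clProj K = 0 := mul_clProj K p fun x hx => by
    have : K ≤ p.ker := by
      rw [hK, Submodule.span_le]
      rintro _ ⟨a, ha, y, rfl⟩
      have h' := congrArg star (h (star a) (star_mem ha))
      rw [star_mul, star_mul, hes, hps, star_star, star_zero] at h'
      exact congrArg (fun T : H →L[ℂ] H => T y) h'
    exact this hx
  refine ⟨clProj K, ⟨clProj_proj K, hz1, fun y hy => commute_of_mem M hy hz2⟩, ?_, ?_⟩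
  · ext x
    exact clProj_apply K (Submodule.subset_span ⟨1, one_mem M, x, rfl⟩)
  · have := congrArg star hpz
    rwa [star_mul, (clProj_proj K).2, hps, star_zero] at this

end VNA

open VNA in
/-- If `f` is a nonzero finite projection of `M`, there is a central
projection `z` with `z f ≠ 0` and `τ(z f) < ∞`. -/
theorem statement_1 {H : Type*} [NormedAddCommGroup H] [InnerProductSpace ℂ H]
    [CompleteSpace H] (M : VonNeumannAlgebra H) (τ : (H →L[ℂ] H) → ENNReal)
    (hτ : IsFNSTrace M τ) (f : H →L[ℂ] H)
    (hf : IsFiniteProjection M f) (hf0 : f ≠ 0) :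
    ∃ z, IsCentralProjection M z ∧ z * f ≠ 0 ∧ τ (z * f) < ⊤ := by
  classical
  have hfM := hf.1
  have hfp := hf.2.1
  obtain ⟨y, hyM, hy0, hyf, hyne, hyt⟩ := hτ.semifinite f hfM (proj_nonneg hfp) hf0
  obtain ⟨e, -, l, hl, heM, hep, he0, hle, -⟩ := exists_spectral M hyM hy0 hyne
  have hef : e * f = e := proj_le_of_le hfp hep hl (hle.trans hyf) hfp.1
  have hfe : f * e = e := by
    have := congrArg star hef
    rwa [star_mul, hep.2, hfp.2] at this
  have het : τ e < ⊤ := by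
    have h1 := trace_mono hτ (smul_mem' M heM l) hyM (smul_nonneg hl.le (proj_nonneg hep)) hle
    rw [hτ.homogeneous l e hl.le heM (proj_nonneg hep)] at h1
    by_contra htop
    rw [not_lt, top_le_iff] at htop
    rw [htop, ENNReal.mul_top (by simpa using hl)] at h1
    exact (h1.trans_lt hyt).ne rfl
  obtain ⟨S, hS, hR, hmax⟩ := exists_maximal_family
    (fun v : H →L[ℂ] H => v ∈ M ∧ star v * v = e ∧ f * v = v)
    (fun v w => star v * w = 0) (fun a b h => star_mul_zero h)
  have hfin : S.Finite := by
    by_contra hinf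
    let g := Set.Infinite.natEmbedding S hinf
    refine he0 (no_infinite M hep hf (fun n => (g n : H →L[ℂ] H)) (fun n => (hS _ (g n).2).1)
      (fun n => (hS _ (g n).2).2.1) (fun n => (hS _ (g n).2).2.2) fun n m hnm => ?_)
    exact hR _ (g n).2 _ (g m).2 fun h => hnm (g.injective (Subtype.ext h))
  set Q := ∑ v ∈ hfin.toFinset, v * star v with hQ
  have hve : ∀ v ∈ S, v * e = v := fun v hv => mul_eq_of_star_mul hep (hS v hv).2.1
  have hQv : ∀ v ∈ S, Q * v = v := by
    intro v hv
    rw [hQ, Finset.sum_mul, Finset.sum_eq_single v]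
    · rw [mul_assoc, (hS v hv).2.1, hve v hv]
    · intro w hw hne
      rw [mul_assoc, hR w (by simpa using hw) v hv hne, mul_zero]
    · intro h; simp [hv] at h
  have hQM : Q ∈ M := sum_mem fun v hv => by
    have := (hS v (by simpa using hv)).1
    exact mul_mem this (star_mem this)
  have hQs : star Q = Q := by rw [hQ, star_sum]; simp
  have hfQ : f * Q = Q := by
    rw [hQ, Finset.mul_sum]
    refine Finset.sum_congr rfl fun v hv => ?_
    rw [← mul_assoc, (hS v (by simpa using hv)).2.2]
  have hQf : Q * f = Q := by
    have := congrArg star hfQ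
    rwa [star_mul, hfp.2, hQs] at this
  have hQQ : Q * Q = Q := by
    conv_lhs => rw [hQ]
    rw [← hQ]
    conv_lhs => arg 2; rw [hQ]
    rw [Finset.mul_sum, hQ]
    refine Finset.sum_congr rfl fun v hv => ?_
    rw [← hQ, ← mul_assoc, hQv v (by simpa using hv)]
  have hpp : IsProjection (f - Q) := by
    refine ⟨?_, by rw [star_sub, hfp.2, hQs]⟩
    rw [sub_mul, mul_sub, mul_sub, hfp.1, hfQ, hQf, hQQ]; abel
  obtain ⟨T, hTM, hT3, hTp, heT, hT0⟩ := comparison M heM (sub_mem hfM hQM) hep hpp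
  have hTe : star T * e = star T := by
    have := congrArg star heT
    rwa [star_mul, hep.2] at this
  have hE : IsProjection (e - T * star T) := by
    refine ⟨?_, by simp [hep.2]⟩
    rw [sub_mul, mul_sub, mul_sub, hep.1, ← mul_assoc e, heT, mul_assoc T (star T) e, hTe,
      ← mul_assoc (T * star T), hT3]
    abel
  have hE0 : e - T * star T ≠ 0 := by
    intro h0
    have h0' : T * star T = e := (sub_eq_zero.1 h0).symm
    have hw : star T ∈ S := by
      refine hmax _ ⟨star_mem hTM, by rw [star_star, h0'], ?_⟩ fun v hv => ?_
      · have h1 : (f - Q) * star T = star T := by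
          have := congrArg star hTp
          rwa [star_mul, hpp.2] at this
        rw [← h1, ← mul_assoc, mul_sub, hfp.1, hfQ]
      · rw [star_star, ← hTp, mul_assoc, sub_mul, (hS v hv).2.2, hQv v hv, sub_self, mul_zero]
    have h2 := hQv _ hw
    have h3 : T * Q = 0 := by
      rw [← hTp, mul_assoc, sub_mul, hfQ, hQQ, sub_self, mul_zero]
    rw [← h2, ← mul_assoc, h3, zero_mul] at h0'
    exact he0 h0'.symm
  obtain ⟨z, hz, hzE, hzp⟩ := exists_central M (e := e - T * star T) (p := f - Q - star T * T)
    (sub_mem heM (mul_mem hTM (star_mem hTM))) hE.2 (by simp [hfp.2, hQs]) hT0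
  refine ⟨z, hz, ?_, ?_⟩
  · intro h0
    apply hE0
    have h1 : f * (e - T * star T) = e - T * star T := by
      have h2 : f * T = T := by rw [← heT, ← mul_assoc, hfe]
      rw [mul_sub, hfe, ← mul_assoc, h2]
    rw [← hzE, ← h1, ← mul_assoc, h0, zero_mul]
  · have h1 : z * f = ∑ v ∈ hfin.toFinset, z * (v * star v) + z * (star T * T) := by
      rw [← Finset.mul_sum, ← hQ, ← sub_eq_zero, ← hzp]
      noncomm_ring
    obtain ⟨a1, a2, a3⟩ := trace_central_le hτ hz hTM heM (sub_nonneg.1 (proj_nonneg hE))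
    obtain ⟨b1, b2, b3⟩ := trace_sum_lt hτ hfin.toFinset (fun v => z * (v * star v)) (by
      intro v hv
      have hv' := hS v (by simpa using hv)
      obtain ⟨c1, c2, c3⟩ := trace_central_le hτ (v := star v) hz (star_mem hv'.1) heM
        (by rw [star_star, hv'.2.1])
      rw [star_star] at c1 c2 c3
      exact ⟨c1, c2, c3.trans_lt het⟩)
    rw [h1, hτ.additive _ _ b1 a1 b2 a2]
    exact ENNReal.add_lt_top.2 ⟨b3, a3.trans_lt het⟩
end
end

section
/- Let M be a σ-finite von Neumann algebra with a faithful normal semifinite trace τ and let α ∈ M^n (n ≥ 1) be a commuting self-adjoint n-tuple. Then there exists an increasing sequence (p_k)_{k≥0} of τ-finite projections in M such that p_k converges to 1 in the strong operator topology (i.e., p_k ξ → ξ for every ξ ∈ H) and ‖[p_k, α]‖ → 0 as k → ∞. -/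
open ContinuousLinearMap Filter Topology

noncomputable section

namespace VNA.Aux

set_option linter.unusedSectionVars false

variable {H : Type*} [NormedAddCommGroup H] [InnerProductSpace ℂ H] [CompleteSpace H]

/-- The range projection of an operator. -/
def R (a : H →L[ℂ] H) : H →L[ℂ] H := (LinearMap.range a.toLinearMap).topologicalClosure.starProjection

theorem R_proj (a : H →L[ℂ] H) : IsProjection (R a) :=
  ⟨isStarProjection_starProjection.isIdempotentElem, isStarProjection_starProjection.isSelfAdjoint⟩

theorem R_mul (a : H →L[ℂ] H) : R a * a = a := by
  ext ξ
  simp only [R, mul_apply_eq_comp]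
  rw [Submodule.starProjection_eq_self_iff]
  exact Submodule.le_topologicalClosure _ ⟨ξ, rfl⟩

theorem mul_R_self (a : H →L[ℂ] H) (ha : star a = a) : a * R a = a := by
  have := congrArg star (R_mul a)
  simpa [(R_proj a).2, ha] using this

theorem mul_starProj_eq (y z : H →L[ℂ] H) (K : Submodule ℂ H) [K.HasOrthogonalProjection]
    (h : ∀ ξ ∈ K, y ξ = z ξ) : y * K.starProjection = z * K.starProjection := by
  ext ξ
  simp only [mul_apply_eq_comp]
  exact h _ (Submodule.starProjection_apply_mem _ _)

theorem mul_R_eq (y z a : H →L[ℂ] H) (h : y * a = z * a) : y * R a = z * R a := by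
  apply mul_starProj_eq
  intro ξ hξ
  have hc : IsClosed {ξ : H | y ξ = z ξ} := isClosed_eq y.continuous z.continuous
  have hs : ((LinearMap.range a.toLinearMap : Submodule ℂ H) : Set H) ⊆ {ξ : H | y ξ = z ξ} := by
    rintro _ ⟨η, rfl⟩
    exact congrArg (fun T : H →L[ℂ] H => T η) h
  exact closure_minimal hs hc hξ

theorem mul_R_zero (y a : H →L[ℂ] H) (h : y * a = 0) : y * R a = 0 := by
  simpa using mul_R_eq y 0 a (by simpa using h)

/-- one sided invariance for `y`, `star y` gives commutation -/
theorem comm_of_inv (p y : H →L[ℂ] H) (hp : star p = p) (h1 : p * y * p = y * p)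
    (h2 : p * star y * p = star y * p) : Commute y p := by
  have h3 := congrArg star h2
  simp only [star_mul, star_star, hp] at h3
  show y * p = p * y
  rw [← h1, mul_assoc, h3]

theorem comm_R (y a : H →L[ℂ] H) (h : Commute y a) (h' : Commute (star y) a) : Commute y (R a) := by
  have key : ∀ y : H →L[ℂ] H, Commute y a → R a * y * R a = y * R a := by
    intro y h
    apply mul_R_eq
    rw [mul_assoc, h.eq, ← mul_assoc, R_mul]
  exact comm_of_inv _ _ (R_proj a).2 (key y h) (key _ h')

theorem comm_R_sa (y a : H →L[ℂ] H) (ha : star a = a) (h : Commute y a) : Commute y (R a) := by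
  have key : ∀ y : H →L[ℂ] H, Commute y a → R a * y * R a = y * R a := by
    intro y h
    apply mul_R_eq
    rw [mul_assoc, h.eq, ← mul_assoc, R_mul]
  refine comm_R y a h ?_
  have := congrArg star h.eq
  simp only [star_mul, ha] at this
  exact this.symm

theorem mem_of_comm (M : VonNeumannAlgebra H) (z : H →L[ℂ] H)
    (h : ∀ y, (∀ g ∈ M, Commute y g) → Commute y z) : z ∈ M := by
  rw [← M.commutant_commutant, VonNeumannAlgebra.mem_commutant_iff]
  intro y hy
  rw [VonNeumannAlgebra.mem_commutant_iff] at hy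
  exact h y (fun g hg => (hy g hg).symm)

theorem star_comm (M : VonNeumannAlgebra H) (y : H →L[ℂ] H) (h : ∀ g ∈ M, Commute y g) :
    ∀ g ∈ M, Commute (star y) g := by
  intro g hg
  have := congrArg star (h (star g) (star_mem hg)).eq
  simp only [star_mul, star_star] at this
  exact this.symm

theorem R_mem (M : VonNeumannAlgebra H) (a : H →L[ℂ] H) (ha : a ∈ M) : R a ∈ M :=
  mem_of_comm M _ fun y hy => comm_R y a (hy a ha) (star_comm M y hy a ha)

theorem cfc_mem (M : VonNeumannAlgebra H) (a : H →L[ℂ] H) (ha : a ∈ M) (f : ℝ → ℝ) :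
    cfc f a ∈ M :=
  mem_of_comm M _ fun _ hy => ((hy a ha).symm.cfc_real f).symm

theorem proj_nonneg {p : H →L[ℂ] H} (hp : IsProjection p) : 0 ≤ p := by
  have := star_mul_self_nonneg p
  rwa [hp.2, hp.1] at this

theorem one_sub_proj {p : H →L[ℂ] H} (hp : IsProjection p) : IsProjection (1 - p) := by
  constructor
  · simp [sub_mul, mul_sub, hp.1]
  · simp [hp.2]

theorem mul_self_eq_zero' {x : H →L[ℂ] H} (h : star x * x = 0) : x = 0 :=
  (CStarRing.star_mul_self_eq_zero_iff x).1 h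

theorem mul_of_le {p q : H →L[ℂ] H} (hp : star p = p) (h : p * q = q) (hq : star q = q) : q * p = q := by
  have := congrArg star h
  simpa [hp, hq] using this

theorem proj_norm_le {p : H →L[ℂ] H} (hp : IsProjection p) : ‖p‖ ≤ 1 :=
  IsStarProjection.norm_le p ⟨hp.1, hp.2⟩

/-- Symmetry in the polar decomposition of a self-adjoint operator. -/
theorem exists_symm (x : H →L[ℂ] H) (hx : star x = x) :
    ∃ s : H →L[ℂ] H, star s = s ∧ s * s = 1 ∧ (∀ y, Commute y x → Commute y s) ∧
      x = s * cfc (fun t : ℝ => |t|) x := by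
  have hx' : IsSelfAdjoint x := hx
  set a := cfc (fun t : ℝ => max t 0) x with ha
  set b := cfc (fun t : ℝ => max (-t) 0) x with hb
  have hsa : star a = a := (cfc_predicate (fun t : ℝ => max t 0) x : IsSelfAdjoint _)
  have hsb : star b = b := (cfc_predicate (fun t : ℝ => max (-t) 0) x : IsSelfAdjoint _)
  have hba : b * a = 0 := by
    rw [ha, hb, ← cfc_mul (fun t : ℝ => max (-t) 0) (fun t : ℝ => max t 0) x]
    rw [← cfc_zero ℝ x]
    congr 1
    ext t
    rcases le_total t 0 with h | h <;> simp [h]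
  have hxab : x = a - b := by
    rw [ha, hb, ← cfc_sub (fun t : ℝ => max t 0) (fun t : ℝ => max (-t) 0) x]
    conv_lhs => rw [← cfc_id ℝ x]
    congr 1
    ext t
    rcases le_total t 0 with h | h <;> simp [h]
  have habs : cfc (fun t : ℝ => |t|) x = a + b := by
    rw [ha, hb, ← cfc_add x (fun t : ℝ => max t 0) (fun t : ℝ => max (-t) 0)]
    congr 1
    ext t
    rcases le_total t 0 with h | h <;> simp [h, abs_of_nonneg, abs_of_nonpos]
  have hEb : R a * b = 0 := by
    have := congrArg star (mul_R_zero b a hba)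
    simpa [(R_proj a).2, hsb] using this
  have hEa := R_mul a
  refine ⟨R a + R a - 1, ?_, ?_, ?_, ?_⟩
  · simp [(R_proj a).2]
  · have := (R_proj a).1
    simp only [sub_mul, mul_sub, add_mul, mul_add, this, mul_one, one_mul]
    abel
  · intro y hy
    have h1 : Commute y (R a) := comm_R_sa y a hsa (hy.symm.cfc_real _).symm
    exact (h1.add_right h1).sub_right (Commute.one_right y)
  · rw [habs, hxab]
    simp only [sub_mul, mul_add, add_mul, hEa, hEb, one_mul]
    abel

theorem approx (m : ℕ) : ∀ (L : ℝ) (x : H →L[ℂ] H), star x = x → ‖x‖ ≤ L →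
    ∃ (S : Set (H →L[ℂ] H)) (d : H →L[ℂ] H), S.Finite ∧
      (∀ s ∈ S, star s = s ∧ s * s = 1 ∧ ∀ y, Commute y x → Commute y s) ∧
      (∀ y, (∀ s ∈ S, Commute y s) → Commute y d) ∧ ‖x - d‖ ≤ L / 2 ^ m := by
  induction m with
  | zero =>
    intro L x hx hL
    exact ⟨∅, 0, Set.finite_empty, by simp, by simp, by simpa using hL⟩
  | succ m ih =>
    intro L x hx hL
    have hx' : IsSelfAdjoint x := hx
    have hL0 : 0 ≤ L := (norm_nonneg x).trans hL
    obtain ⟨s, hs1, hs2, hs3, hs4⟩ := exists_symm x hx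
    set b := cfc (fun t : ℝ => |t| - L / 2) x with hb
    have hb' : cfc (fun t : ℝ => |t|) x = b + algebraMap ℝ _ (L / 2) := by
      rw [hb, cfc_sub (fun t : ℝ => |t|) (fun _ => L / 2) x, cfc_const (L / 2) x]
      abel
    have hbn : ‖b‖ ≤ L / 2 := by
      apply norm_cfc_le (by positivity)
      intro t ht
      have h1 : |t| ≤ L := by
        have := spectrum.norm_le_norm_mul_of_mem ht
        rw [Real.norm_eq_abs] at this
        have h1 : ‖(1 : H →L[ℂ] H)‖ ≤ 1 := ContinuousLinearMap.norm_id_le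
        nlinarith [norm_nonneg x]
      rw [Real.norm_eq_abs, abs_le]
      constructor <;> linarith [abs_nonneg t]
    have hbs : star b = b := (cfc_predicate (fun t : ℝ => |t| - L / 2) x : IsSelfAdjoint _)
    obtain ⟨S, d, hS, hS1, hS2, hd⟩ := ih (L / 2) b hbs hbn
    refine ⟨insert s S, s * (d + algebraMap ℝ _ (L / 2)), hS.insert s, ?_, ?_, ?_⟩
    · intro t ht
      rcases Set.mem_insert_iff.1 ht with rfl | ht
      · exact ⟨hs1, hs2, hs3⟩
      · refine ⟨(hS1 t ht).1, (hS1 t ht).2.1, fun y hy => (hS1 t ht).2.2 y ?_⟩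
        exact (hy.symm.cfc_real _).symm
    · intro y hy
      refine (hy s (Set.mem_insert _ _)).mul_right (Commute.add_right ?_ ?_)
      · exact hS2 y fun t ht => hy t (Set.mem_insert_of_mem _ ht)
      · exact (Algebra.commutes _ _).symm
    · have : x - s * (d + algebraMap ℝ _ (L / 2)) = s * (b - d) := by
        conv_lhs => rw [hs4, hb']
        rw [← mul_sub]; congr 1; abel
      rw [this]
      have hsn : ‖s‖ ≤ 1 := by
        have := CStarRing.norm_star_mul_self (x := s)
        rw [hs1, hs2] at this
        have h1 : ‖(1 : H →L[ℂ] H)‖ ≤ 1 := ContinuousLinearMap.norm_id_le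
        nlinarith [norm_nonneg s]
      calc ‖s * (b - d)‖ ≤ ‖s‖ * ‖b - d‖ := norm_mul_le _ _
        _ ≤ 1 * (L / 2 / 2 ^ m) := by gcongr
        _ = L / 2 ^ (m + 1) := by rw [pow_succ]; field_simp

end VNA.Aux

namespace VNA.Aux

set_option linter.unusedSectionVars false

variable {H : Type*} [NormedAddCommGroup H] [InnerProductSpace ℂ H] [CompleteSpace H]

theorem tau_mono {M : VonNeumannAlgebra H} {τ : (H →L[ℂ] H) → ENNReal} (hτ : IsFNSTrace M τ)
    {x y : H →L[ℂ] H} (hx : x ∈ M) (hy : y ∈ M) (h0 : 0 ≤ x) (h : x ≤ y) : τ x ≤ τ y := by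
  have := hτ.additive x (y - x) hx (sub_mem hy hx) h0 (sub_nonneg.2 h)
  rw [add_sub_cancel] at this
  rw [this]
  exact le_self_add

/-- Closedness of the set of strong convergence to the identity. -/
theorem conv_closed (T : ℕ → H →L[ℂ] H) (hT : ∀ k, ‖T k‖ ≤ 1) :
    IsClosed {ξ : H | Tendsto (fun k => T k ξ) atTop (𝓝 ξ)} := by
  rw [← isSeqClosed_iff_isClosed]
  intro u ξ hu hξ
  simp only [Set.mem_ofPred_eq] at hu ⊢
  rw [Metric.tendsto_atTop]
  intro ε hε
  obtain ⟨N, hN⟩ := (Metric.tendsto_atTop.1 hξ) (ε / 3) (by positivity)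
  obtain ⟨K, hK⟩ := (Metric.tendsto_atTop.1 (hu N)) (ε / 3) (by positivity)
  refine ⟨K, fun k hk => ?_⟩
  have h1 := hN N le_rfl
  have h2 := hK k hk
  have h3 : dist (T k ξ) (T k (u N)) ≤ dist (u N) ξ := by
    rw [dist_comm (u N), dist_eq_norm, dist_eq_norm, ← map_sub]
    calc ‖T k (ξ - u N)‖ ≤ ‖T k‖ * ‖ξ - u N‖ := (T k).le_opNorm _
      _ ≤ 1 * ‖ξ - u N‖ := by gcongr; exact hT k
      _ = _ := one_mul _
  have h4 := dist_triangle4 (T k ξ) (T k (u N)) (u N) ξ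
  linarith

theorem tau_range {M : VonNeumannAlgebra H} {τ : (H →L[ℂ] H) → ENNReal}
    (hτ : IsFNSTrace M τ) (x e : H →L[ℂ] H) (hx : x ∈ M)
    (he : e ∈ M) (hp : IsProjection e) (hxe : x * e = x) : τ (R (x * star x)) ≤ τ e := by
  set a := x * star x with ha
  have ha0 : 0 ≤ a := mul_star_self_nonneg x
  have hasa : IsSelfAdjoint a := IsSelfAdjoint.of_nonneg ha0
  have hsa : star a = a := hasa
  have haM : a ∈ M := mul_mem hx (star_mem hx)
  have hspec : ∀ t ∈ spectrum ℝ a, 0 ≤ t := fun t ht => spectrum_nonneg_of_nonneg ha0 ht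
  -- the approximating functions
  set c : ℕ → ℝ := fun k => 1 / ((k : ℝ) + 1) with hc
  have hcpos : ∀ k, 0 < c k := fun k => by simp only [hc]; positivity
  have hden : ∀ k (t : ℝ), 0 < |t| + c k := fun k t => by have := hcpos k; positivity
  set g : ℕ → ℝ → ℝ := fun k t => √((|t| + c k)⁻¹) with hg
  have hgc : ∀ k, Continuous (g k) := fun k => by
    refine Real.continuous_sqrt.comp (Continuous.inv₀ (by fun_prop) (fun t => (hden k t).ne'))
  set h : ℕ → ℝ → ℝ := fun k t => t * (|t| + c k)⁻¹ with hh
  have hhc : ∀ k, Continuous (h k) := fun k => by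
    refine continuous_id.mul (Continuous.inv₀ (by fun_prop) (fun t => (hden k t).ne'))
  have hgh : ∀ k t, g k t * t * g k t = h k t := fun k t => by
    simp only [hg, hh]
    rw [mul_right_comm, Real.mul_self_sqrt (inv_nonneg.2 (hden k t).le), mul_comm]
  set z : ℕ → H →L[ℂ] H := fun k => cfc (h k) a with hz
  have hzM : ∀ k, z k ∈ M := fun k => cfc_mem M a haM _
  have hz0 : ∀ k, 0 ≤ z k := fun k => cfc_nonneg fun t ht => by
    have := hspec t ht
    have := hden k t
    simp only [hh]; positivity
  have hz1 : ∀ k, z k ≤ 1 := fun k => by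
    rw [hz, ← cfc_one ℝ a]
    refine cfc_mono (fun t ht => ?_) (hhc k).continuousOn (by fun_prop)
    have h1 := hspec t ht
    have h2 := hden k t
    simp only [hh, Pi.one_apply]
    rw [← div_eq_mul_inv, div_le_one h2, abs_of_nonneg h1]
    linarith [hcpos k]
  have hzn : ∀ k, ‖z k‖ ≤ 1 := fun k => (CStarAlgebra.norm_le_one_iff_of_nonneg (z k) (hz0 k)).2 (hz1 k)
  have hzmono : Monotone z := by
    intro k l hkl
    refine cfc_mono (fun t ht => ?_) (hhc k).continuousOn (hhc l).continuousOn
    have h1 := hspec t ht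
    have h2 : c l ≤ c k := by simp only [hc]; gcongr
    have h3 := hden l t
    simp only [hh]
    gcongr
  have hza : ∀ k, ‖z k * a - a‖ ≤ c k := by
    intro k
    have : z k * a - a = cfc (fun t => h k t * t - t) a := by
      rw [cfc_sub (fun t => h k t * t) (fun t => t) a
        (by have := hhc k; fun_prop) (by fun_prop),
        cfc_mul (h k) (fun t => t) a (hhc k).continuousOn (by fun_prop), cfc_id' ℝ a]
    rw [this]
    refine norm_cfc_le (hcpos k).le fun t ht => ?_
    have h1 := hspec t ht
    have h2 := hden k t
    have h3 : h k t * t - t = - (c k * (t * (|t| + c k)⁻¹)) := by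
      simp only [hh]; rw [abs_of_nonneg h1] at *; field_simp; ring
    have h4 : t * (|t| + c k)⁻¹ ≤ 1 := by
      rw [← div_eq_mul_inv, div_le_one h2, abs_of_nonneg h1]
      linarith [hcpos k]
    have h5 : 0 ≤ t * (|t| + c k)⁻¹ := by positivity
    rw [h3, norm_neg, Real.norm_eq_abs, abs_of_nonneg (mul_nonneg (hcpos k).le h5)]
    nlinarith [hcpos k]
  -- the range projection absorbs z
  have hzfac : ∀ k, z k = a * cfc (fun t => (|t| + c k)⁻¹) a := by
    intro k
    have hcont : Continuous (fun t : ℝ => (|t| + c k)⁻¹) :=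
      Continuous.inv₀ (by fun_prop) (fun t => (hden k t).ne')
    have := cfc_mul (fun t : ℝ => t) (fun t => (|t| + c k)⁻¹) a (by fun_prop) hcont.continuousOn
    rw [cfc_id' ℝ a] at this
    exact this
  have hRz : ∀ k, R a * z k = z k := fun k => by
    rw [hzfac, ← mul_assoc, R_mul]
  have hzsa : ∀ k, star (z k) = z k := fun k => IsSelfAdjoint.of_nonneg (hz0 k)
  have hzR : ∀ k, z k * R a = z k := fun k => by
    have := congrArg star (hRz k)
    simpa [(R_proj a).2, hzsa k] using this
  have hzleR : ∀ k, z k ≤ R a := fun k => by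
    have := star_left_conjugate_le_conjugate (hz1 k) (R a)
    rwa [(R_proj a).2, hRz, hzR, mul_one, (R_proj a).1] at this
  -- strong convergence
  have hclim : Tendsto c atTop (𝓝 0) := tendsto_one_div_add_atTop_nhds_zero_nat
  have hconv : ∀ ξ, Tendsto (fun k => z k ξ) atTop (𝓝 (R a ξ)) := by
    intro ξ
    have hcl := conv_closed z hzn
    have hs : ((LinearMap.range a.toLinearMap : Submodule ℂ H) : Set H) ⊆
        {ξ : H | Tendsto (fun k => z k ξ) atTop (𝓝 ξ)} := by
      rintro _ ⟨η, rfl⟩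
      simp only [Set.mem_ofPred_eq]
      rw [tendsto_iff_norm_sub_tendsto_zero]
      have hl : Tendsto (fun k => c k * ‖η‖) atTop (𝓝 0) := by
        simpa using hclim.mul_const ‖η‖
      refine squeeze_zero (fun _ => norm_nonneg _) (fun k => ?_) hl
      calc _ = ‖(z k * a - a) η‖ := rfl
        _ ≤ ‖z k * a - a‖ * ‖η‖ := ContinuousLinearMap.le_opNorm _ _
        _ ≤ c k * ‖η‖ := by gcongr; exact hza k
    have hmem : R a ξ ∈ (LinearMap.range a.toLinearMap).topologicalClosure :=
      Submodule.starProjection_apply_mem _ _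
    have h1 : R a ξ ∈ {ξ : H | Tendsto (fun k => z k ξ) atTop (𝓝 ξ)} :=
      closure_minimal hs hcl hmem
    have h2 : ∀ k, z k (R a ξ) = z k ξ := fun k =>
      congrArg (fun T : H →L[ℂ] H => T ξ) (hzR k)
    simpa only [Set.mem_ofPred_eq, h2] using h1
  have hlub : IsLUB (Set.range fun i : ULift ℕ => z i.down) (R a) := by
    constructor
    · rintro _ ⟨i, rfl⟩
      exact hzleR _
    · intro b hb
      have hb' : ∀ k, z k ≤ b := fun k => hb ⟨⟨k⟩, rfl⟩
      have hbsa : IsSelfAdjoint b := IsSelfAdjoint.of_nonneg ((hz0 0).trans (hb' 0))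
      rw [ContinuousLinearMap.le_def, ContinuousLinearMap.isPositive_def']
      refine ⟨hbsa.sub (R_proj a).2, fun ξ => ?_⟩
      have hl : Tendsto (fun k => (b - z k).reApplyInnerSelf ξ) atTop
          (𝓝 ((b - R a).reApplyInnerSelf ξ)) := by
        simp only [ContinuousLinearMap.reApplyInnerSelf_apply, _root_.sub_apply]
        exact (RCLike.continuous_re.tendsto _).comp
          ((tendsto_const_nhds.sub (hconv ξ)).inner tendsto_const_nhds)
      refine ge_of_tendsto' hl fun k => ?_
      have := hb' k
      rw [ContinuousLinearMap.le_def, ContinuousLinearMap.isPositive_def'] at this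
      exact this.2 ξ
  have hnorm := hτ.normal (ULift ℕ) (fun i => z i.down) (R a) (fun i => hzM _) (fun i => hz0 _)
    (fun i j hij => hzmono hij) ⟨1, fun i => hzn _⟩ (R_mem M a haM) hlub
  rw [hnorm]
  refine iSup_le fun i => ?_
  -- estimate of the trace of `z`
  set k := i.down
  set G := cfc (g k) a with hG
  have hGM : G ∈ M := cfc_mem M a haM _
  have hGs : star G = G := (cfc_predicate (g k) a : IsSelfAdjoint _)
  set w := G * x with hw
  have hww : w * star w = z k := by
    have h1 : w * star w = G * a * G := by
      rw [hw, star_mul, hGs, ha]; simp only [mul_assoc]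
    have h2 : G * a * G = cfc (fun t => g k t * t * g k t) a := by
      have := hgc k
      rw [cfc_mul (fun t => g k t * t) (g k) a (by fun_prop) (by fun_prop),
        cfc_mul (g k) (fun t => t) a (by fun_prop) (by fun_prop), cfc_id' ℝ a]
    rw [h1, h2]
    congr 1
    ext t
    exact hgh k t
  have hwM : w ∈ M := mul_mem hGM hx
  have hwe : w * e = w := by rw [hw, mul_assoc, hxe]
  have hw1 : star w * w ≤ 1 := by
    rw [← CStarAlgebra.norm_le_one_iff_of_nonneg _ (star_mul_self_nonneg w),
      CStarRing.norm_star_mul_self, ← CStarRing.norm_self_mul_star, hww]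
    exact hzn k
  have hwle : star w * w ≤ e := by
    have := star_left_conjugate_le_conjugate hw1 e
    have h1 : star e * (star w * w) * e = star w * w := by
      calc star e * (star w * w) * e = star (w * e) * (w * e) := by
            rw [star_mul w e]; simp only [mul_assoc]
        _ = _ := by rw [hwe]
    rwa [h1, mul_one, hp.2, hp.1] at this
  rw [← hww, ← hτ.tracial w hwM]
  exact tau_mono hτ (mul_mem (star_mem hwM) hwM) he (star_mul_self_nonneg w) hwle

theorem le_of_mul {p q : H →L[ℂ] H} (hp : IsProjection p) (hq : IsProjection q) (h : q * p = p) :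
    p ≤ q := by
  have h' := mul_of_le hq.2 h hp.2
  have hpr : IsProjection (q - p) := by
    constructor
    · simp [sub_mul, mul_sub, hp.1, hq.1, h, h']
    · simp [hp.2, hq.2]
  exact sub_nonneg.1 (proj_nonneg hpr)

/-- `R (e + f)` is the supremum of the projections `e` and `f`. -/
theorem sup_mul_left {e f : H →L[ℂ] H} (he : IsProjection e) (hf : IsProjection f) :
    R (e + f) * e = e := by
  set p := R (e + f) with hpdef
  have hp := R_proj (e + f)
  rw [← hpdef] at hp
  have hq := one_sub_proj hp
  set q := 1 - p with hqdef
  have h0 : q * (e + f) * q = 0 := by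
    rw [hqdef, sub_mul, R_mul, one_mul, sub_self, zero_mul]
  have h1 : q * e * q = 0 := by
    apply le_antisymm
    · have h2 : q * e * q = - (q * f * q) := by
        rw [eq_neg_iff_add_eq_zero, ← h0, mul_add, add_mul]
      rw [h2, neg_nonpos]
      have := star_left_conjugate_nonneg (proj_nonneg hf) q
      rwa [hq.2] at this
    · have := star_left_conjugate_nonneg (proj_nonneg he) q
      rwa [hq.2] at this
  have h2 : e * q = 0 := by
    apply mul_self_eq_zero'
    rw [star_mul, hq.2, he.2, mul_assoc, ← mul_assoc e, he.1, ← mul_assoc, h1]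
  have h3 := congrArg star h2
  rw [star_mul, hq.2, he.2, star_zero, hqdef, sub_mul, one_mul, sub_eq_zero] at h3
  exact h3.symm

theorem sup_mul_right {e f : H →L[ℂ] H} (he : IsProjection e) (hf : IsProjection f) :
    R (e + f) * f = f := by
  rw [add_comm]; exact sup_mul_left hf he

theorem sup_finite {M : VonNeumannAlgebra H} {τ : (H →L[ℂ] H) → ENNReal}
    (hτ : IsFNSTrace M τ) {e f : H →L[ℂ] H} (he : IsTauFiniteProjection M τ e)
    (hf : IsTauFiniteProjection M τ f) : IsTauFiniteProjection M τ (R (e + f)) := by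
  obtain ⟨heM, hep, het⟩ := he
  obtain ⟨hfM, hfp, hft⟩ := hf
  refine ⟨R_mem M _ (add_mem heM hfM), R_proj _, ?_⟩
  set x := (1 - f) * e with hx
  have hxM : x ∈ M := mul_mem (sub_mem (one_mem M) hfM) heM
  set r := R (x * star x) with hr
  have hrp : IsProjection r := R_proj _
  have hrM : r ∈ M := R_mem M _ (mul_mem hxM (star_mem hxM))
  have hrt : τ r ≤ τ e := tau_range hτ x e hxM heM hep (by rw [hx, mul_assoc, hep.1])
  have hfx : f * x = 0 := by rw [hx, ← mul_assoc, mul_sub, mul_one, hfp.1, sub_self, zero_mul]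
  have hfr : f * r = 0 := mul_R_zero f _ (by rw [← mul_assoc, hfx, zero_mul])
  have hrf : r * f = 0 := by
    have := congrArg star hfr
    simpa [hrp.2, hfp.2] using this
  have hrx : r * x = x := by
    have h1 : (1 - r) * x = 0 := by
      have h2 : star (star ((1 - r) * x)) * star ((1 - r) * x) = 0 := by
        rw [star_star, star_mul, mul_assoc, ← mul_assoc x, ← mul_assoc, sub_mul, R_mul]
        simp
      have := mul_self_eq_zero' h2
      exact star_eq_zero.1 this
    rw [sub_mul, one_mul, sub_eq_zero] at h1
    exact h1.symm
  have hre : r * e = x := by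
    have : r * e = r * x := by
      rw [hx, ← mul_assoc, mul_sub, mul_one, hrf, sub_zero]
    rw [this, hrx]
  set q := f + r with hq
  have hqp : IsProjection q := by
    constructor
    · simp [hq, add_mul, mul_add, hfp.1, hrp.1, hfr, hrf]
    · simp [hq, hfp.2, hrp.2]
  have hqe : q * e = e := by
    rw [hq, add_mul, hre, hx, sub_mul, one_mul]; abel
  have hqf : q * f = f := by
    rw [hq, add_mul, hrf, hfp.1, add_zero]
  have hqR : q * R (e + f) = R (e + f) := by
    have := mul_R_eq q 1 (e + f) (by rw [mul_add, hqe, hqf, one_mul])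
    rwa [one_mul] at this
  have hle := le_of_mul (R_proj (e + f)) hqp hqR
  calc τ (R (e + f)) ≤ τ q := tau_mono hτ (R_mem M _ (add_mem heM hfM)) (add_mem hfM hrM)
        (proj_nonneg (R_proj _)) hle
    _ = τ f + τ r := hτ.additive f r hfM hrM (proj_nonneg hfp) (proj_nonneg hrp)
    _ < ⊤ := ENNReal.add_lt_top.2 ⟨hft, hrt.trans_lt het⟩

end VNA.Aux

namespace VNA.Aux

variable {H : Type*} [NormedAddCommGroup H] [InnerProductSpace ℂ H] [CompleteSpace H]

theorem conj_finite {M : VonNeumannAlgebra H} {τ : (H →L[ℂ] H) → ENNReal}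
    (hτ : IsFNSTrace M τ) {e s : H →L[ℂ] H} (he : IsTauFiniteProjection M τ e)
    (hs : s ∈ M) (hs1 : star s = s) (hs2 : s * s = 1) :
    IsTauFiniteProjection M τ (s * e * s) := by
  obtain ⟨heM, hep, het⟩ := he
  have h1 : star (e * s) * (e * s) = s * e * s := by
    rw [star_mul, hs1, hep.2]
    calc s * e * (e * s) = s * (e * e) * s := by simp only [mul_assoc]
      _ = _ := by rw [hep.1]
  have h2 : (e * s) * star (e * s) = e := by
    rw [star_mul, hs1, hep.2]
    calc e * s * (s * e) = e * (s * s) * e := by simp only [mul_assoc]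
      _ = _ := by rw [hs2, mul_one, hep.1]
  refine ⟨mul_mem (mul_mem hs heM) hs, ⟨?_, ?_⟩, ?_⟩
  · calc s * e * s * (s * e * s) = s * e * (s * s) * e * s := by simp only [mul_assoc]
      _ = s * (e * e) * s := by rw [hs2, mul_one, mul_assoc s e e]
      _ = _ := by rw [hep.1]
  · rw [star_mul, star_mul, hs1, hep.2, mul_assoc]
  · rw [← h1, hτ.tracial _ (mul_mem heM hs), h2]
    exact het

theorem enlarge {M : VonNeumannAlgebra H} {τ : (H →L[ℂ] H) → ENNReal}
    (hτ : IsFNSTrace M τ) (e : H →L[ℂ] H) (he : IsTauFiniteProjection M τ e)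
    (S : Set (H →L[ℂ] H)) (hS : S.Finite) :
    (∀ s ∈ S, s ∈ M ∧ star s = s ∧ s * s = 1) → (∀ s ∈ S, ∀ t ∈ S, Commute s t) →
    ∃ p, IsTauFiniteProjection M τ p ∧ p * e = e ∧ ∀ s ∈ S, Commute s p := by
  induction S, hS using Set.Finite.induction_on with
  | empty =>
    intro _ _
    exact ⟨e, he, he.2.1.1, by simp⟩
  | @insert s S _ _ ih =>
    intro h1 h2
    obtain ⟨p, hp, hpe, hpS⟩ := ih (fun t ht => h1 t (Set.mem_insert_of_mem _ ht))
      (fun t ht u hu => h2 t (Set.mem_insert_of_mem _ ht) u (Set.mem_insert_of_mem _ hu))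
    obtain ⟨hsM, hs1, hs2⟩ := h1 s (Set.mem_insert _ _)
    have hf := conj_finite hτ hp hsM hs1 hs2
    have hsa : star (p + s * p * s) = p + s * p * s := by
      rw [star_add, hp.2.1.2, hf.2.1.2]
    refine ⟨R (p + s * p * s), sup_finite hτ hp hf, ?_, ?_⟩
    · rw [← hpe, ← mul_assoc, sup_mul_left hp.2.1 hf.2.1]
    · intro t ht
      apply comm_R_sa _ _ hsa
      rcases Set.mem_insert_iff.1 ht with rfl | ht
      · show t * (p + t * p * t) = (p + t * p * t) * t
        have h3 : t * (t * p * t) = p * t := by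
          rw [← mul_assoc, ← mul_assoc, hs2, one_mul]
        have h4 : t * p * t * t = t * p := by
          rw [mul_assoc, hs2, mul_one]
        rw [mul_add, add_mul, h3, h4, add_comm]
      · have h3 := hpS t ht
        have h4 := h2 t (Set.mem_insert_of_mem _ ht) s (Set.mem_insert _ _)
        exact h3.add_right ((h4.mul_right h3).mul_right h4)

theorem key {M : VonNeumannAlgebra H} {τ : (H →L[ℂ] H) → ENNReal}
    (hτ : IsFNSTrace M τ) {n : ℕ} (α : Fin n → (H →L[ℂ] H))
    (hα : IsCommutingSelfAdjointTuple M α) (e : H →L[ℂ] H) (he : IsTauFiniteProjection M τ e)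
    (ε : ℝ) (hε : 0 < ε) :
    ∃ p, IsTauFiniteProjection M τ p ∧ p * e = e ∧ ∀ j, ‖p * α j - α j * p‖ ≤ ε := by
  obtain ⟨hαM, hαs, hαc⟩ := hα
  have h : ∀ j, ∃ (S : Set (H →L[ℂ] H)) (d : H →L[ℂ] H), S.Finite ∧
      (∀ s ∈ S, star s = s ∧ s * s = 1 ∧ ∀ y, Commute y (α j) → Commute y s) ∧
      (∀ y, (∀ s ∈ S, Commute y s) → Commute y d) ∧ ‖α j - d‖ ≤ ε / 2 := by
    intro j
    obtain ⟨m, hm⟩ := pow_unbounded_of_one_lt (‖α j‖ / (ε / 2)) (one_lt_two (α := ℝ))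
    obtain ⟨S, d, h1, h2, h3, h4⟩ := approx m ‖α j‖ (α j) (hαs j) le_rfl
    refine ⟨S, d, h1, h2, h3, h4.trans ?_⟩
    rw [div_lt_iff₀ (by positivity)] at hm
    rw [div_le_iff₀ (by positivity)]
    linarith
  choose S d hS1 hS2 hS3 hS4 using h
  have hcom : ∀ i j, ∀ s ∈ S i, ∀ t ∈ S j, Commute s t := by
    intro i j s hs t ht
    apply (hS2 j t ht).2.2
    exact ((hS2 i s hs).2.2 (α j) (hαc j i)).symm
  obtain ⟨p, hp, hpe, hpc⟩ := enlarge hτ e he (⋃ j, S j) (Set.finite_iUnion hS1)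
    (by
      intro s hs
      obtain ⟨j, hj⟩ := Set.mem_iUnion.1 hs
      refine ⟨mem_of_comm M s fun y hy => (hS2 j s hj).2.2 y (hy _ (hαM j)),
        (hS2 j s hj).1, (hS2 j s hj).2.1⟩)
    (by
      intro s hs t ht
      obtain ⟨i, hi⟩ := Set.mem_iUnion.1 hs
      obtain ⟨j, hj⟩ := Set.mem_iUnion.1 ht
      exact hcom i j s hi t hj)
  refine ⟨p, hp, hpe, fun j => ?_⟩
  have hpd : p * d j = d j * p :=
    hS3 j p fun s hs => (hpc s (Set.mem_iUnion.2 ⟨j, hs⟩)).symm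
  have h1 : p * α j - α j * p = p * (α j - d j) - (α j - d j) * p := by
    rw [mul_sub, sub_mul, hpd]; abel
  have hpn := proj_norm_le hp.2.1
  rw [h1]
  calc _ ≤ ‖p * (α j - d j)‖ + ‖(α j - d j) * p‖ := norm_sub_le _ _
    _ ≤ ‖p‖ * ‖α j - d j‖ + ‖α j - d j‖ * ‖p‖ := add_le_add (norm_mul_le _ _) (norm_mul_le _ _)
    _ ≤ 1 * (ε / 2) + (ε / 2) * 1 := by gcongr <;> exact hS4 j
    _ = ε := by ring

/-- Every nonzero projection of `M` dominates a nonzero τ-finite projection. -/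
theorem exists_finite_sub {M : VonNeumannAlgebra H} {τ : (H →L[ℂ] H) → ENNReal}
    (hτ : IsFNSTrace M τ) (q : H →L[ℂ] H) (hqM : q ∈ M) (hq : IsProjection q) (hq0 : q ≠ 0) :
    ∃ z, IsTauFiniteProjection M τ z ∧ z ≠ 0 ∧ z * q = z := by
  obtain ⟨y, hyM, hy0, hyq, hyne, hyt⟩ := hτ.semifinite q hqM (proj_nonneg hq) hq0
  have hysa : IsSelfAdjoint y := IsSelfAdjoint.of_nonneg hy0
  have hys : star y = y := hysa
  -- `y (1-q) = 0`
  have hy1 : y * (1 - q) = 0 := by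
    have hr := one_sub_proj hq
    have h1 : (1 - q) * y * (1 - q) = 0 := by
      apply le_antisymm
      · have := star_left_conjugate_le_conjugate hyq (1 - q)
        rw [hr.2] at this
        have h2 : (1 - q) * q * (1 - q) = 0 := by
          rw [sub_mul 1 q q, one_mul, hq.1, sub_self, zero_mul]
        rwa [h2] at this
      · have := star_left_conjugate_nonneg hy0 (1 - q)
        rwa [hr.2] at this
    obtain ⟨b, hb⟩ := CStarAlgebra.nonneg_iff_eq_star_mul_self.1 hy0
    have h3 : b * (1 - q) = 0 := by
      apply mul_self_eq_zero'
      rw [star_mul, hr.2, mul_assoc, ← mul_assoc (star b), ← hb, ← mul_assoc, h1]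
    rw [hb, mul_assoc, h3, mul_zero]
  set δ := ‖y‖ / 2 with hδ
  have hδ0 : 0 < δ := by have := norm_pos_iff.2 hyne; positivity
  set a := cfc (fun t : ℝ => max (t - δ) 0) y with ha
  set b := cfc (fun t : ℝ => max (δ - t) 0) y with hb
  have ha0 : 0 ≤ a := cfc_nonneg fun t _ => le_max_right _ _
  have hb0 : 0 ≤ b := cfc_nonneg fun t _ => le_max_right _ _
  have hsa : star a = a := IsSelfAdjoint.of_nonneg ha0
  have hsb : star b = b := IsSelfAdjoint.of_nonneg hb0
  have hba : b * a = 0 := by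
    rw [ha, hb, ← cfc_mul (fun t : ℝ => max (δ - t) 0) (fun t : ℝ => max (t - δ) 0) y]
    rw [← cfc_zero ℝ y]
    congr 1
    ext t
    rcases le_total t δ with h | h <;> simp [h]
  have hab : y - algebraMap ℝ _ δ = a - b := by
    have h1 : y - algebraMap ℝ _ δ = cfc (fun t : ℝ => t - δ) y := by
      rw [cfc_sub (fun t : ℝ => t) (fun _ => δ) y, cfc_id' ℝ y, cfc_const δ y]
    rw [h1, ha, hb, ← cfc_sub (fun t : ℝ => max (t - δ) 0) (fun t : ℝ => max (δ - t) 0) y]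
    congr 1
    ext t
    rcases le_total t δ with h | h <;> simp [h]
  have haM : a ∈ M := cfc_mem M y hyM _
  set z := R a with hz
  have hzp : IsProjection z := R_proj a
  have hzM : z ∈ M := R_mem M a haM
  have hza : z * a = a := R_mul a
  have haz : a * z = a := mul_R_self a hsa
  have hbz : b * z = 0 := mul_R_zero b a hba
  have hyz : Commute y z := comm_R_sa y a hsa ((Commute.refl y).cfc_real _).symm
  have hzne : z ≠ 0 := by
    intro h0
    have ha' : a = 0 := by rw [← hza, h0, zero_mul]
    rw [ha', zero_sub] at hab
    have h1 : y ≤ algebraMap ℝ _ δ := by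
      rw [← sub_nonpos, hab]; exact neg_nonpos.2 hb0
    have h2 := (CStarAlgebra.norm_le_iff_le_algebraMap y hδ0.le hy0).2 h1
    linarith
  have hle : δ • z ≤ y := by
    have h1 : y * z - δ • z = a := by
      have : (y - algebraMap ℝ _ δ) * z = a := by rw [hab, sub_mul, haz, hbz, sub_zero]
      rw [← this, sub_mul, Algebra.smul_def]
    have h2 : y - δ • z = (1 - z) * y * (1 - z) + a := by
      have h3 : (1 - z) * y * (1 - z) = y - y * z := by
        have h5 : z * y = y * z := hyz.eq.symm
        have h6 : y * z * z = y * z := by rw [mul_assoc, hzp.1]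
        simp only [sub_mul, mul_sub, one_mul, mul_one, h5, h6, sub_self, sub_zero]
      rw [h3, ← h1]; abel
    rw [← sub_nonneg, h2]
    have h4 := star_left_conjugate_nonneg hy0 (1 - z)
    rw [(one_sub_proj hzp).2] at h4
    exact add_nonneg h4 ha0
  have hzt : τ z < ⊤ := by
    have hδz : δ • z ∈ M := by
      have h5 : y * z - a = δ • z := by
        have : (y - algebraMap ℝ _ δ) * z = a := by rw [hab, sub_mul, haz, hbz, sub_zero]
        rw [← this, sub_mul, Algebra.smul_def]; abel
      rw [← h5]
      exact sub_mem (mul_mem hyM hzM) haM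
    have h1 := tau_mono hτ hδz hyM (smul_nonneg hδ0.le (proj_nonneg hzp)) hle
    rw [hτ.homogeneous δ z hδ0.le hzM (proj_nonneg hzp)] at h1
    by_contra hcon
    rw [not_lt, top_le_iff] at hcon
    rw [hcon, ENNReal.mul_top (by simpa using hδ0)] at h1
    exact absurd hyt (not_lt.2 h1)
  refine ⟨z, ⟨hzM, hzp, hzt⟩, hzne, ?_⟩
  -- (1-q) y = 0 so (1-q) commutes with y, hence with `a`
  have hqy : (1 - q) * y = 0 := by
    have := congrArg star hy1
    simpa [hys, hq.2] using this
  have hlq : (1 - q) * a = 0 := by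
    have hcont : Continuous (fun t : ℝ => max (t - δ) 0 * (max t δ)⁻¹) :=
      Continuous.mul (by fun_prop) (Continuous.inv₀ (by fun_prop)
        (fun t => (hδ0.trans_le (le_max_right t δ)).ne'))
    have h1 : a = y * cfc (fun t : ℝ => max (t - δ) 0 * (max t δ)⁻¹) y := by
      have h2 := cfc_mul (fun t : ℝ => t) (fun t : ℝ => max (t - δ) 0 * (max t δ)⁻¹) y
        (by fun_prop) hcont.continuousOn
      rw [cfc_id' ℝ y] at h2
      rw [← h2, ha]
      congr 1
      ext t
      rcases le_total t δ with h | h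
      · simp [h]
      · have : t ≠ 0 := (hδ0.trans_le h).ne'
        rw [max_eq_left h]
        field_simp
    rw [h1, ← mul_assoc, hqy, zero_mul]
  have : (1 - q) * z = 0 := mul_R_zero _ _ hlq
  have h2 := congrArg star this
  rw [star_mul, hzp.2, (one_sub_proj hq).2, star_zero, mul_sub, mul_one, sub_eq_zero] at h2
  exact h2.symm

end VNA.Aux

namespace VNA.Aux

variable {H : Type*} [NormedAddCommGroup H] [InnerProductSpace ℂ H] [CompleteSpace H]

theorem zero_finite {M : VonNeumannAlgebra H} {τ : (H →L[ℂ] H) → ENNReal}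
    (hτ : IsFNSTrace M τ) : IsTauFiniteProjection M τ 0 :=
  ⟨zero_mem M, ⟨by simp, by simp⟩, by rw [hτ.map_zero]; exact ENNReal.zero_lt_top⟩

/-- A sequence of τ-finite projections with no nonzero τ-finite projection orthogonal to all. -/
theorem exists_seq {M : VonNeumannAlgebra H} (hσ : SigmaFinite M)
    {τ : (H →L[ℂ] H) → ENNReal} (hτ : IsFNSTrace M τ) :
    ∃ e : ℕ → H →L[ℂ] H, (∀ k, IsTauFiniteProjection M τ (e k)) ∧
      ∀ z, IsTauFiniteProjection M τ z → (∀ k, z * e k = 0) → z = 0 := by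
  obtain ⟨S, hS⟩ := zorn_subset
    {S : Set (H →L[ℂ] H) | (∀ p ∈ S, IsTauFiniteProjection M τ p ∧ p ≠ 0) ∧
      ∀ p ∈ S, ∀ q ∈ S, p ≠ q → p * q = 0} (by
    intro C hC hchain
    refine ⟨⋃₀ C, ⟨?_, ?_⟩, fun s hs => Set.subset_sUnion_of_mem hs⟩
    · rintro p ⟨s, hs, hp⟩
      exact (hC hs).1 p hp
    · rintro p ⟨s, hs, hp⟩ q ⟨t, ht, hq⟩ hne
      rcases hchain.total hs ht with h | h
      · exact (hC ht).2 p (h hp) q hq hne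
      · exact (hC hs).2 p hp q (h hq) hne)
  obtain ⟨⟨hS1, hS2⟩, hmax⟩ := hS
  have hcount : S.Countable := hσ S
    (fun p hp => ⟨(hS1 p hp).1.1, (hS1 p hp).1.2.1, (hS1 p hp).2⟩) hS2
  obtain ⟨e, he⟩ := (hcount.insert (0 : H →L[ℂ] H)).exists_eq_range ⟨0, Set.mem_insert _ _⟩
  have he' : ∀ k, e k ∈ insert 0 S := fun k => he ▸ ⟨k, rfl⟩
  refine ⟨e, fun k => ?_, fun z hz hz0 => ?_⟩
  · rcases Set.mem_insert_iff.1 (he' k) with h | h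
    · rw [h]; exact zero_finite hτ
    · exact (hS1 _ h).1
  · by_contra hne
    have hzS : ∀ p ∈ S, z * p = 0 := by
      intro p hp
      have : p ∈ Set.range e := he ▸ Set.mem_insert_of_mem _ hp
      obtain ⟨k, rfl⟩ := this
      exact hz0 k
    have hzS' : ∀ p ∈ S, p * z = 0 := by
      intro p hp
      have := congrArg star (hzS p hp)
      simpa [hz.2.1.2, (hS1 p hp).1.2.1.2] using this
    have hins : insert z S ⊆ S := by
      refine hmax (y := insert z S) ⟨?_, ?_⟩ (Set.subset_insert _ _)
      · intro p hp
        rcases Set.mem_insert_iff.1 hp with rfl | hp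
        · exact ⟨hz, hne⟩
        · exact hS1 p hp
      · intro p hp q hq hpq
        rcases Set.mem_insert_iff.1 hp with rfl | hp
        · rcases Set.mem_insert_iff.1 hq with rfl | hq
          · exact absurd rfl hpq
          · exact hzS q hq
        · rcases Set.mem_insert_iff.1 hq with hqz | hq
          · rw [hqz]; exact hzS' p hp
          · exact hS2 p hp q hq hpq
    have := hzS z (hins (Set.mem_insert _ _))
    rw [hz.2.1.1] at this
    exact hne this

/-- strong convergence -/
theorem strong_conv {M : VonNeumannAlgebra H}
    {τ : (H →L[ℂ] H) → ENNReal} (hτ : IsFNSTrace M τ) (e p : ℕ → H →L[ℂ] H)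
    (he : ∀ z, IsTauFiniteProjection M τ z → (∀ k, z * e k = 0) → z = 0)
    (hp : ∀ k, IsTauFiniteProjection M τ (p k)) (hmono : ∀ k, p (k + 1) * p k = p k)
    (hpe : ∀ k, p k * e k = e k) (ξ : H) : Tendsto (fun k => p k ξ) atTop (𝓝 ξ) := by
  have hle : ∀ k l, k ≤ l → p l * e k = e k := by
    intro k l hkl
    induction l, hkl using Nat.le_induction with
    | base => exact hpe k
    | succ l hl ih => rw [← ih, ← mul_assoc, hmono]
  let K : Submodule ℂ H :=
    { carrier := {ξ | Tendsto (fun k => p k ξ) atTop (𝓝 ξ)}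
      add_mem' := by
        intro a b ha hb
        have h := Tendsto.add (x := atTop) (f := fun k => p k a) (g := fun k => p k b) ha hb
        show Tendsto (fun k => p k (a + b)) atTop (𝓝 (a + b))
        simpa only [map_add] using h
      zero_mem' := by
        show Tendsto (fun k => p k 0) atTop (𝓝 0)
        simp
      smul_mem' := by
        intro c a ha
        have h := Tendsto.const_smul (l := atTop) (f := fun k => p k a) ha c
        show Tendsto (fun k => p k (c • a)) atTop (𝓝 (c • a))
        simpa only [map_smul] using h }
  have hKmem : ∀ η, η ∈ K ↔ Tendsto (fun k => p k η) atTop (𝓝 η) := fun η => Iff.rfl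
  have hKc : IsClosed (K : Set H) := conv_closed p fun k => proj_norm_le (hp k).2.1
  have : CompleteSpace K := hKc.completeSpace_coe
  set Q := K.starProjection with hQ
  have hQp : IsProjection Q :=
    ⟨isStarProjection_starProjection.isIdempotentElem, isStarProjection_starProjection.isSelfAdjoint⟩
  have hinv : ∀ y, (∀ g ∈ M, Commute y g) → Q * y * Q = y * Q := by
    intro y hy
    apply mul_starProj_eq
    intro η hη
    show Q (y η) = y η
    rw [hQ, Submodule.starProjection_eq_self_iff, hKmem]
    have h1 : ∀ k, p k (y η) = y (p k η) := fun k =>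
      (congrArg (fun T : H →L[ℂ] H => T η) (hy (p k) (hp k).1).eq).symm
    simp only [h1]
    exact (y.continuous.tendsto _).comp ((hKmem η).1 hη)
  have hQM : Q ∈ M := mem_of_comm M Q fun y hy =>
    comm_of_inv Q y hQp.2 (hinv y hy) (hinv _ (star_comm M y hy))
  have hQe : ∀ k, Q * e k = e k := by
    intro k
    ext η
    show Q (e k η) = e k η
    rw [hQ, Submodule.starProjection_eq_self_iff, hKmem]
    apply tendsto_const_nhds.congr'
    filter_upwards [eventually_ge_atTop k] with l hl
    exact (congrArg (fun T : H →L[ℂ] H => T η) (hle k l hl)).symm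
  have hQ1 : 1 - Q = 0 := by
    by_contra hne
    obtain ⟨z, hz, hzne, hzq⟩ := exists_finite_sub hτ (1 - Q) (sub_mem (one_mem M) hQM)
      (one_sub_proj hQp) hne
    refine hzne (he z hz fun k => ?_)
    rw [← hzq, mul_assoc, sub_mul, one_mul, hQe, sub_self, mul_zero]
  rw [← hKmem, ← Submodule.starProjection_eq_self_iff, ← hQ, ← sub_eq_zero.1 hQ1]
  rfl

end VNA.Aux

open VNA in
/-- There is an increasing sequence of τ-finite projections converging
strongly to `1` whose commutators with `α` tend to `0` in norm. -/
theorem statement_6 {H : Type*} [NormedAddCommGroup H] [InnerProductSpace ℂ H]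
    [CompleteSpace H] (M : VonNeumannAlgebra H) (hσ : SigmaFinite M)
    (τ : (H →L[ℂ] H) → ENNReal) (hτ : IsFNSTrace M τ)
    (n : ℕ) (hn : 0 < n) (α : Fin n → (H →L[ℂ] H))
    (hα : IsCommutingSelfAdjointTuple M α) :
    ∃ p : ℕ → (H →L[ℂ] H),
      (∀ k, IsTauFiniteProjection M τ (p k)) ∧
      (∀ k, p (k + 1) * p k = p k) ∧
      (∀ ξ : H, Filter.Tendsto (fun k => p k ξ) Filter.atTop (nhds ξ)) ∧
      Filter.Tendsto (fun k => commNorm α (p k)) Filter.atTop (nhds 0) := by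
  obtain ⟨e, he1, he2⟩ := VNA.Aux.exists_seq hσ hτ
  have hstep : ∀ (k : ℕ) (q : H →L[ℂ] H), IsTauFiniteProjection M τ q →
      ∃ p, IsTauFiniteProjection M τ p ∧ p * q = q ∧ p * e k = e k ∧
        ∀ j, ‖p * α j - α j * p‖ ≤ 1 / ((k : ℝ) + 1) := by
    intro k q hq
    obtain ⟨p, hp1, hp2, hp3⟩ := VNA.Aux.key hτ α hα _ (VNA.Aux.sup_finite hτ hq (he1 k))
      (1 / ((k : ℝ) + 1)) (by positivity)
    refine ⟨p, hp1, ?_, ?_, hp3⟩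
    · rw [← VNA.Aux.sup_mul_left hq.2.1 (he1 k).2.1, ← mul_assoc, hp2]
    · rw [← VNA.Aux.sup_mul_right hq.2.1 (he1 k).2.1, ← mul_assoc, hp2]
  choose F hF1 hF2 hF3 hF4 using hstep
  let P : ℕ → {q : H →L[ℂ] H // IsTauFiniteProjection M τ q} := fun k =>
    Nat.rec ⟨F 0 0 (VNA.Aux.zero_finite hτ), hF1 _ _ _⟩
      (fun k q => ⟨F (k + 1) q.1 q.2, hF1 _ _ _⟩) k
  have hPe : ∀ k, (P k).1 * e k = e k := by
    intro k
    cases k with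
    | zero => exact hF3 _ _ _
    | succ k => exact hF3 _ _ _
  have hPα : ∀ k j, ‖(P k).1 * α j - α j * (P k).1‖ ≤ 1 / ((k : ℝ) + 1) := by
    intro k
    cases k with
    | zero => exact hF4 _ _ _
    | succ k => exact hF4 _ _ _
  have hPm : ∀ k, (P (k + 1)).1 * (P k).1 = (P k).1 := fun k => hF2 _ _ _
  refine ⟨fun k => (P k).1, fun k => (P k).2, hPm, ?_, ?_⟩
  · exact VNA.Aux.strong_conv hτ e _ he2 (fun k => (P k).2) hPm hPe
  · refine squeeze_zero (fun k => Real.iSup_nonneg fun j => norm_nonneg _) (fun k => ?_)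
      tendsto_one_div_add_atTop_nhds_zero_nat
    exact Real.iSup_le (hPα k) (by positivity)
end
end

section
/- Let M be a properly infinite von Neumann algebra and let (p_k)_{k∈ℕ} be a sequence of pairwise orthogonal properly infinite projections in M with Σ_{k∈ℕ} p_k = 1, the series converging in the strong operator topology. Then the only finite projection of M belonging to WZ*({p_k}_{k∈ℕ}) is 0. -/
open ContinuousLinearMap Filter Topology

noncomputable section

namespace VNA

variable {H : Type*} [NormedAddCommGroup H] [InnerProductSpace ℂ H] [CompleteSpace H]

theorem eq_zero_of_star_mul_self (w : H →L[ℂ] H) (h : star w * w = 0) : w = 0 :=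
  CStarRing.star_mul_self_eq_zero_iff w |>.1 h

/-- A subprojection of a finite projection is finite. -/
theorem finite_of_le (M : VonNeumannAlgebra H) {x e : H →L[ℂ] H}
    (hx : IsFiniteProjection M x) (heM : e ∈ M) (he : IsProjection e)
    (hxe : x * e = e) : IsFiniteProjection M e := by
  refine ⟨heM, he, fun q hqM hq heq hv => ?_⟩
  obtain ⟨v, hvM, h1, h2⟩ := hv
  obtain ⟨hxM, ⟨hxx, hxs⟩, hfin⟩ := hx
  have hex : e * x = e := by
    have := congrArg star hxe
    simpa [he.2, hxs] using this
  have hqe : q * e = q := by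
    have := congrArg star heq
    simpa [he.2, hq.2] using this
  have hvq : v * q = v := by
    have : v * q - v = 0 := by
      apply eq_zero_of_star_mul_self
      simp only [star_sub, star_mul, hq.2]
      have : (q * star v - star v) * (v * q - v)
          = q * (star v * v) * q - q * (star v * v) - (star v * v) * q + star v * v := by
        noncomm_ring
      rw [this, h1]; simp [hq.1]
    exact sub_eq_zero.1 this
  have hev : e * v = v := by
    have : star (e * v - v) = 0 := by
      apply eq_zero_of_star_mul_self
      simp only [star_sub, star_mul, star_star, he.2]
      have : (e * v - v) * (star v * e - star v)
          = e * (v * star v) * e - e * (v * star v) - (v * star v) * e + v * star v := by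
        noncomm_ring
      rw [this, h2]; simp [he.1]
    exact sub_eq_zero.1 (star_eq_zero.1 this)
  have hfv : (x - e) * v = 0 := by
    rw [← hev, ← mul_assoc, sub_mul, hxe, he.1]; simp
  have hvf : v * (x - e) = 0 := by
    rw [← hvq, mul_assoc, ← hqe, mul_assoc, mul_sub, hex, he.1]; simp
  have hfs : star (x - e) = x - e := by rw [star_sub, hxs, he.2]
  have hff : (x - e) * (x - e) = x - e := by
    rw [mul_sub, sub_mul, sub_mul, hxx, hex, hxe, he.1]; simp
  have hsvf : star v * (x - e) = 0 := by
    have := congrArg star hfv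
    simpa only [star_mul, hfs, star_zero] using this
  have hfsv : (x - e) * star v = 0 := by
    have := congrArg star hvf
    simpa only [star_mul, hfs, star_zero] using this
  have hqf : q * (x - e) = 0 := by
    rw [← hqe, mul_assoc, mul_sub, hex, he.1]; simp
  have hfq : (x - e) * q = 0 := by
    rw [← heq, ← mul_assoc, sub_mul, hxe, he.1]; simp
  have hfM : x - e ∈ M := sub_mem hxM heM
  have hxf : x * (x - e) = x - e := by rw [mul_sub, hxx, hxe]
  have hxq : x * q = q := by rw [← heq, ← mul_assoc, hxe]
  have key := hfin (q + (x - e)) (add_mem hqM hfM) ⟨?_, ?_⟩ ?_ ⟨v + (x - e), add_mem hvM hfM, ?_, ?_⟩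
  · have : q + (x - e) - (x - e) = x - (x - e) := by rw [key]
    simpa using this
  · rw [mul_add, add_mul, add_mul, hq.1, hqf, hfq, hff]; simp
  · rw [star_add, hq.2, hfs]
  · rw [mul_add, hxq, hxf]
  · rw [star_add, hfs, mul_add, add_mul, add_mul, h1, hsvf, hfv, hff]; simp
  · rw [star_add, hfs, mul_add, add_mul, add_mul, h2, hvf, hfsv, hff]; simp

/-- If `e ≤ p` commutes with all `p y p`, `y` in the commutant of the centre, then `e = z p` for a central
projection `z`. -/
theorem exists_central_s8 (M : VonNeumannAlgebra H) {p e : H →L[ℂ] H}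
    (hp : IsProjection p) (he : IsProjection e) (hpe : p * e = e)
    (hc : ∀ y ∈ Set.centralizer (centerSet M), e * (p * y * p) = (p * y * p) * e) :
    ∃ z, IsCentralProjection M z ∧ z * p = e := by
  set S : Set H := {h | ∃ y ∈ Set.centralizer (centerSet M), ∃ k, h = y (e k)} with hS
  set K : Submodule ℂ H := (Submodule.span ℂ S).topologicalClosure with hK
  have : CompleteSpace K := (Submodule.isClosed_topologicalClosure _).completeSpace_coe
  have hz : IsStarProjection K.starProjection := isStarProjection_starProjection
  have hr : K.starProjection.range = K := Submodule.range_starProjection K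
  have hinv : ∀ w ∈ Set.centralizer (centerSet M),
      K.starProjection.range ∈ Module.End.invtSubmodule (w : H →ₗ[ℂ] H) := by
    intro w hw
    rw [hr, Module.End.mem_invtSubmodule]
    refine Submodule.topologicalClosure_minimal _ ?_ ?_
    · rw [Submodule.span_le]
      rintro _ ⟨y, hy, k, rfl⟩
      refine Submodule.le_topologicalClosure _ (Submodule.subset_span ⟨w * y, Set.mul_mem_centralizer hw hy, k, rfl⟩)
    · exact (Submodule.isClosed_topologicalClosure _).preimage w.continuous
  have hzM : K.starProjection ∈ M := by
    rw [VonNeumannAlgebra.IsStarProjection.mem_iff hz]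
    intro y hy
    apply hinv
    intro m hm
    exact VonNeumannAlgebra.mem_commutant_iff.1 hy m hm.1
  have hzM' : K.starProjection ∈ M.commutant := by
    rw [VonNeumannAlgebra.IsStarProjection.mem_iff hz]
    intro y hy
    apply hinv
    intro m hm
    rw [VonNeumannAlgebra.commutant_commutant] at hy
    exact hm.2 y hy
  have hzs : star K.starProjection = K.starProjection := hz.isSelfAdjoint.star_eq
  have hze : K.starProjection * e = e := by
    ext h
    refine Submodule.starProjection_eq_self_iff.2 ?_
    exact Submodule.le_topologicalClosure _ (Submodule.subset_span ⟨1, Set.one_mem_centralizer, h, rfl⟩)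
  have hep : e * p = e := by
    have := congrArg star hpe
    simpa [he.2, hp.2] using this
  have hez : e * K.starProjection = e := by
    have := congrArg star hze
    simpa only [star_mul, he.2, hzs] using this
  have hle : K ≤ ((e * p - p : H →L[ℂ] H) : H →ₗ[ℂ] H).ker := by
    refine Submodule.topologicalClosure_minimal _ ?_ (e * p - p).isClosed_ker
    rw [Submodule.span_le]
    rintro _ ⟨y, hy, k, rfl⟩
    have h1 : (e * p - p) * (y * e) = 0 := by
      have h2 := hc y hy
      have h3 : p * (y * e) = e * (p * y * p) := by
        rw [h2, mul_assoc, hpe, mul_assoc]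
      rw [sub_mul, mul_assoc, h3, ← mul_assoc, he.1, sub_self]
    exact congrArg (fun f : H →L[ℂ] H => f k) h1
  have hpz : p * K.starProjection = e := by
    have h0 : (e * p - p) * K.starProjection = 0 := by
      ext h
      exact hle (Submodule.starProjection_apply_mem K h)
    rw [hep, sub_mul, hez] at h0
    exact (sub_eq_zero.1 h0).symm
  refine ⟨K.starProjection, ⟨⟨hz.isIdempotentElem, hzs⟩, hzM, fun y hy => ?_⟩, ?_⟩
  · exact (VonNeumannAlgebra.mem_commutant_iff.1 hzM' y hy).symm
  · have := congrArg star hpz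
    simpa only [star_mul, he.2, hp.2, hzs] using this

end VNA

open VNA in
/-- If `(p_k)` are pairwise orthogonal properly infinite projections with
`Σ p_k = 1` strongly, then the only finite projection of `M` in `WZ*({p_k})` is `0`. -/
theorem statement_8 {H : Type*} [NormedAddCommGroup H] [InnerProductSpace ℂ H]
    [CompleteSpace H] (M : VonNeumannAlgebra H) (hM : ProperlyInfinite M)
    (p : ℕ → (H →L[ℂ] H))
    (hp : ∀ k, IsProperlyInfiniteProjection M (p k))
    (horth : ∀ k l, k ≠ l → p k * p l = 0)
    (hsum : ∀ ξ : H, HasSum (fun k => p k ξ) ξ) :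
    ∀ x ∈ WZstar M (Set.range p), IsFiniteProjection M x → x = 0 := by
  intro x hx hfin
  have hcomm : ∀ k, ∀ y ∈ Set.centralizer (centerSet M),
      (p k * y * p k) * x = x * (p k * y * p k) := by
    intro k y hy
    refine hx _ ?_
    rintro m (⟨l, rfl⟩ | hm)
    · by_cases h : k = l
      · subst h
        rw [mul_assoc (p k * y), (hp k).2.1.1, ← mul_assoc, ← mul_assoc, (hp k).2.1.1]
      · rw [mul_assoc (p k * y), horth k l h, ← mul_assoc, ← mul_assoc, horth l k (Ne.symm h)]
        simp
    · have h1 := hm.2 _ (hp k).1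
      have h2 := hy m hm
      rw [← mul_assoc, ← mul_assoc, h1, mul_assoc (p k) m y, h2, mul_assoc (p k * y), ← h1]
      simp only [mul_assoc]
  have hpx : ∀ k, p k * x = x * p k := by
    intro k
    have := hcomm k 1 Set.one_mem_centralizer
    simpa [(hp k).2.1.1] using this
  have hzero : ∀ k, x * p k = 0 := by
    intro k
    by_contra hne
    have hxx := hfin.2.1.1
    have hpp := (hp k).2.1.1
    have he : IsProjection (x * p k) := by
      constructor
      · rw [mul_assoc, ← mul_assoc (p k), hpx, mul_assoc, hpp, ← mul_assoc, hxx]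
      · rw [star_mul, hfin.2.1.2, (hp k).2.1.2, hpx]
    obtain ⟨z, hz, hze⟩ := exists_central_s8 M (p := p k) (e := x * p k) (hp k).2.1 he
      (by rw [← hpx, ← mul_assoc, hpp]) (by
        intro y hy
        have hc := hcomm k y hy
        have h1 : p k * (p k * y * p k) = p k * y * p k := by
          rw [← mul_assoc, ← mul_assoc, hpp]
        have h2 : (p k * y * p k) * p k = p k * y * p k := by
          rw [mul_assoc, hpp]
        rw [mul_assoc, h1, ← hc, ← hpx, ← mul_assoc, h2])
    have hinf := (hp k).2.2 z hz (by rw [hze]; exact hne)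
    rw [hze] at hinf
    exact hinf.2.2 (finite_of_le M hfin hinf.1 he (by rw [← mul_assoc, hxx]))
  ext ξ
  have h := hsum (x ξ)
  have h0 : (fun k => p k (x ξ)) = fun _ => 0 := by
    funext k
    have : p k * x = 0 := (hpx k).trans (hzero k)
    exact congrArg (fun f : H →L[ℂ] H => f ξ) this
  rw [h0] at h
  simpa using h.unique hasSum_zero
end
end

section
/- Let X be a totally disconnected compact metrizable space, Y a Hausdorff topological space, and π : X → Y a continuous surjection. There exists a sequence (π_k)_{k∈ℕ} of Borel measurable maps π_k : Y → X such that: (i) π ∘ π_k = id_Y for every k; (ii) every open subset A ⊆ X satisfies A ⊆ ⋃_{k∈ℕ} (π_k ∘ π)⁻¹(A); (iii) for every continuous function f : X → ℝ with f ≥ 0 one has sup_{k∈ℕ} f(π_k(π(x))) ≥ f(x) for every x ∈ X. -/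
theorem aux_section {X Y : Type*} [TopologicalSpace X] [CompactSpace X]
    [MeasurableSpace X] [BorelSpace X]
    [TopologicalSpace Y] [T2Space Y] [MeasurableSpace Y] [BorelSpace Y]
    (π : X → Y) (hπc : Continuous π) (hπs : Function.Surjective π)
    (f : X → ℝ) (hf : Continuous f) (hi : Function.Injective f) :
    ∃ s : Y → X, Measurable s ∧ (∀ y, π (s y) = y) ∧ ∀ x, f (s (π x)) ≤ f x := by
  have h : ∀ y, ∃ x, π x = y ∧ ∀ x', π x' = y → f x ≤ f x' := by
    intro y
    have hc : IsCompact (π ⁻¹' {y}) := (isClosed_singleton.preimage hπc).isCompact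
    obtain ⟨x, hx, hm⟩ := hc.exists_isMinOn (hπs y) hf.continuousOn
    exact ⟨x, hx, fun x' hx' => hm hx'⟩
  choose s hs hm using h
  refine ⟨s, ?_, hs, fun x => hm _ _ rfl⟩
  have he : MeasurableEmbedding f := (hf.isClosedEmbedding hi).measurableEmbedding
  rw [← he.measurable_comp_iff]
  refine measurable_of_Iic fun t => ?_
  have : (f ∘ s) ⁻¹' Set.Iic t = π '' (f ⁻¹' Set.Iic t) := by
    ext y
    constructor
    · intro h
      exact ⟨s y, h, hs y⟩
    · rintro ⟨x, hx, rfl⟩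
      exact (hm _ x rfl).trans hx
  rw [this]
  exact (((isClosed_Iic.preimage hf).isCompact).image hπc).isClosed.measurableSet

theorem aux_embed (X : Type*) [TopologicalSpace X] [CompactSpace X]
    [TopologicalSpace.MetrizableSpace X] [TotallyDisconnectedSpace X] :
    ∃ f : X → ℝ, Continuous f ∧ Function.Injective f ∧ ∀ x, f x ∈ Set.Icc (0:ℝ) 1 := by
  letI := TopologicalSpace.metrizableSpaceMetric X
  have : Countable (TopologicalSpace.Clopens X) :=
    TopologicalSpace.Clopens.countable_iff_secondCountable.2 inferInstance
  obtain ⟨U, hU⟩ := exists_surjective_nat (TopologicalSpace.Clopens X)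
  classical
  let g : X → (ℕ → Bool) := fun x n => decide (x ∈ U n)
  have hg : Continuous g := by
    refine continuous_pi fun n => ?_
    have : IsLocallyConstant (fun x => decide (x ∈ U n)) := by
      rw [IsLocallyConstant.iff_continuous]
      rw [continuous_bool_rng true]
      convert (U n).isClopen using 1
      ext x; simp
    exact this.continuous
  have hgi : Function.Injective g := by
    intro x y h
    by_contra hne
    obtain ⟨V, hV, hx, hy⟩ := compact_exists_isClopen_in_isOpen
      (isOpen_compl_singleton (x := y)) (x := x) hne
    obtain ⟨n, hn⟩ := hU ⟨V, hV⟩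
    have := congrFun h n
    simp only [g, hn, decide_eq_decide] at this
    exact hy (this.1 hx) rfl
  refine ⟨fun x => (cantorSetHomeomorphNatToBool.symm (g x) : cantorSet).1, ?_, ?_, ?_⟩
  · exact continuous_subtype_val.comp (cantorSetHomeomorphNatToBool.symm.continuous.comp hg)
  · exact Subtype.val_injective.comp (cantorSetHomeomorphNatToBool.symm.injective.comp hgi)
  · intro x
    exact cantorSet_subset_unitInterval (cantorSetHomeomorphNatToBool.symm (g x)).2

/-- Borel sections of a continuous surjection from a totally disconnected
compact metrizable space onto a Hausdorff space, with covering and pointwise-sup properties. -/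
theorem statement_10 (X Y : Type*) [TopologicalSpace X] [CompactSpace X]
    [TopologicalSpace.MetrizableSpace X] [TotallyDisconnectedSpace X]
    [MeasurableSpace X] [BorelSpace X]
    [TopologicalSpace Y] [T2Space Y] [MeasurableSpace Y] [BorelSpace Y]
    (π : X → Y) (hπc : Continuous π) (hπs : Function.Surjective π) :
    ∃ πk : ℕ → Y → X,
      (∀ k, Measurable (πk k)) ∧
      (∀ k, π ∘ πk k = id) ∧
      (∀ A : Set X, IsOpen A → A ⊆ ⋃ k, (πk k ∘ π) ⁻¹' A) ∧
      (∀ f : X → ℝ, Continuous f → (∀ x, 0 ≤ f x) →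
        ∀ x, f x ≤ ⨆ k, f (πk k (π x))) := by
  classical
  obtain ⟨f, hf, hfi, hf01⟩ := aux_embed X
  letI := TopologicalSpace.metrizableSpaceMetric X
  have : Countable (TopologicalSpace.Clopens X) :=
    TopologicalSpace.Clopens.countable_iff_secondCountable.2 inferInstance
  obtain ⟨U, hU⟩ := exists_surjective_nat (TopologicalSpace.Clopens X)
  have key : ∀ k, ∃ s : Y → X, Measurable s ∧ (∀ y, π (s y) = y) ∧
      ∀ x ∈ U k, s (π x) ∈ U k := by
    intro k
    let g : X → ℝ := fun x => if x ∈ U k then f x else f x + 2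
    have hg : Continuous g := by
      refine Continuous.if ?_ hf (hf.add continuous_const)
      intro a ha
      have : frontier {x | x ∈ U k} = ∅ := (U k).isClopen.frontier_eq
      rw [this] at ha
      exact ha.elim
    have hgi : Function.Injective g := by
      intro x y h
      have hx := hf01 x
      have hy := hf01 y
      simp only [g] at h
      apply hfi
      split_ifs at h <;> linarith [hx.1, hx.2, hy.1, hy.2]
    obtain ⟨s, h1, h2, h3⟩ := aux_section π hπc hπs g hg hgi
    refine ⟨s, h1, h2, fun x hx => ?_⟩
    by_contra hn
    have := h3 x
    simp only [g, if_pos hx, if_neg hn] at this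
    linarith [(hf01 x).2, (hf01 (s (π x))).1]
  choose s h1 h2 h3 using key
  have hA : ∀ A : Set X, IsOpen A → ∀ x ∈ A, ∃ k, s k (π x) ∈ A := by
    intro A hA x hx
    obtain ⟨V, hV, hxV, hVA⟩ := compact_exists_isClopen_in_isOpen hA hx
    obtain ⟨n, hn⟩ := hU ⟨V, hV⟩
    refine ⟨n, hVA ?_⟩
    have := h3 n x (by rw [hn]; exact hxV)
    rw [hn] at this
    exact this
  refine ⟨s, h1, fun k => funext (h2 k), ?_, ?_⟩
  · intro A hAo x hx
    exact Set.mem_iUnion.2 (hA A hAo x hx)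
  · intro φ hφ _ x
    have hb : BddAbove (Set.range fun k => φ (s k (π x))) :=
      (isCompact_range hφ).bddAbove.mono (by rintro _ ⟨k, rfl⟩; exact ⟨_, rfl⟩)
    refine le_of_forall_lt fun c hc => ?_
    obtain ⟨k, hk⟩ := hA (φ ⁻¹' Set.Ioi c) (isOpen_Ioi.preimage hφ) x hc
    exact lt_of_lt_of_le hk (le_ciSup hb k)
end

section
/- Let X be a totally disconnected compact metrizable space, Y a Hausdorff topological space, π : X → Y a continuous surjection, and (π_k)_{k∈ℕ} a sequence of Borel measurable maps π_k : Y → X such that π ∘ π_k = id_Y for every k and every open A ⊆ X satisfies A ⊆ ⋃_{k∈ℕ} (π_k ∘ π)⁻¹(A). Let ν be a Borel measure on X with ν(U) > 0 for every nonempty open U ⊆ X, and let ν∘π⁻¹ denote the pushforward measure B ↦ ν(π⁻¹(B)) on the Borel sets of Y. If f : X → ℝ is continuous with f ≥ 0 and, for every k ∈ ℕ, the set {y ∈ Y : f(π_k(y)) ≠ 0} is (ν∘π⁻¹)-null, then f = 0. -/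
open MeasureTheory

/-- If `ν` is a Borel measure positive on nonempty open sets, `(π_k)` are
Borel sections of `π` with the covering property, and `f ≥ 0` is continuous with each set
`{f ∘ π_k ≠ 0}` null for the pushforward measure `ν ∘ π⁻¹`, then `f = 0`. -/
theorem statement_11 (X Y : Type*) [TopologicalSpace X] [CompactSpace X]
    [TopologicalSpace.MetrizableSpace X] [TotallyDisconnectedSpace X]
    [MeasurableSpace X] [BorelSpace X]
    [TopologicalSpace Y] [T2Space Y] [MeasurableSpace Y] [BorelSpace Y]
    (π : X → Y) (hπc : Continuous π) (hπs : Function.Surjective π)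
    (πk : ℕ → Y → X) (hπk : ∀ k, Measurable (πk k))
    (hsect : ∀ k, π ∘ πk k = id)
    (hcover : ∀ A : Set X, IsOpen A → A ⊆ ⋃ k, (πk k ∘ π) ⁻¹' A)
    (ν : Measure X)
    (hν : ∀ U : Set X, IsOpen U → U.Nonempty → 0 < ν U)
    (f : X → ℝ) (hf : Continuous f) (hf0 : ∀ x, 0 ≤ f x)
    (hnull : ∀ k, Measure.map π ν {y | f (πk k y) ≠ 0} = 0) :
    f = 0 := by
  have hA : IsOpen {x | f x ≠ 0} := isOpen_ne.preimage hf
  by_contra hne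
  obtain ⟨x, hx⟩ : ∃ x, f x ≠ 0 := by
    by_contra h
    push Not at h
    exact hne (funext h)
  have h0 : ν {x | f x ≠ 0} = 0 := by
    refine measure_mono_null (hcover _ hA) (measure_iUnion_null fun k => ?_)
    have hm : MeasurableSet {y | f (πk k y) ≠ 0} := hπk k hA.measurableSet
    have h := hnull k
    rw [Measure.map_apply hπc.measurable hm] at h
    exact h
  exact (hν _ hA ⟨x, hx⟩).ne' h0
end
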